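/- arXiv:2411.19201 — 3 statements merged into one kernel-verified Lean document; each statement's English description precedes it below -/
import Mathlib

section
/- Let M be a multiset of points in AG(2,q), let D and D̄ ⊆ 𝔽_q ∪ {∞} be its sets of mod-special and mod-equidistributed directions, and for each d̄ ∈ D̄ let r_{d̄} ∈ {0,…,p−1} be such that every line with slope d̄ contains r_{d̄} points of M modulo p. Define c_M = Σ_{(x,y)∈M} χ_{[x,y,1]} − Σ_{d̄∈D̄} r_{d̄}·χ_{[1,d̄,0]} (the first sum with multiplicities; for d̄ = ∞, [1,∞,0] denotes the line [0,1,0]). Then for all d ∈ 𝔽_q ∪ {∞} and b ∈ 𝔽_q, the value of c_M at the point (d,−1,b) (read as (1,0,b) when d = ∞) equals pr_{M,d}(b) if d ∈ D and equals 0 otherwise; consequently c_M is an odd codeword on the |D| lines X + dY = 0 with d ∈ D (for d = ∞, the line Y = 0), which are concurrent at (0,0,1). -/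
/-!
The points of `PG(2,q)` other than `(0,0,1)` are the points `(d,-1,b)` (with `(1,0,b)` for `d = ∞`),
called `dirPt d b` below. The dual line `[x,y,1]` contains `dirPt d b` iff `(x,y)` lies on the affine
line with slope `d` and parameter `b`, so the first sum in `cM` takes the value `lineCount M d b`
there (`sum_chiVec_dirPt`). The line `[1,e,0]` contains `dirPt d b` iff `e = d` (`dirChi_dirPt`), so
the second sum removes exactly `r d` when `d` is mod-equidistributed and nothing otherwise. This gives
the values of `cM`, and non-constancy on the line of a mod-special direction is then the definition of
mod-special.

The support claim also concerns the point `(0,0,1)`. It lies on all the lines, so this is a genuine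
condition only when there is no mod-special direction; then `cM` takes the value `-∑ r d` there, which
vanishes by a double count of `M` modulo `p` (`sum_r_eq_zero`).
-/

attribute [local instance] Classical.propDecidable

noncomputable section

open Polynomial

variable {F : Type} [Field F]

/-- Point `P` of `AG(2,q)` lies on the line with slope `d` (`none` stands for slope `∞`)
and parameter `b`. -/
def onAffLine (d : Option F) (b : F) (P : F × F) : Prop :=
  match d with
  | some m => P.2 = m * P.1 + b
  | none => P.1 + b = 0

/-- Number of points of the multiset `M` (counted with multiplicity) on the line with
slope `d` and parameter `b`. -/
def lineCount (M : Multiset (F × F)) (d : Option F) (b : F) : ℕ :=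
  Multiset.countP (onAffLine d b) M

/-- `d` is a mod-special direction of `M` (w.r.t. the prime `p`). -/
def IsModSpecial (p : ℕ) (M : Multiset (F × F)) (d : Option F) : Prop :=
  ¬ ∀ b₁ b₂ : F, (lineCount M d b₁ : ZMod p) = (lineCount M d b₂ : ZMod p)

/-- `d` is a special direction of `M`: some line with slope `d` contains neither
`⌊|M|/q⌋` nor `⌈|M|/q⌉` points of `M`. -/
def IsSpecial [Fintype F] (M : Multiset (F × F)) (d : Option F) : Prop :=
  ¬ ∀ b : F, lineCount M d b = Multiset.card M / Fintype.card F ∨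
      lineCount M d b = (Multiset.card M + Fintype.card F - 1) / Fintype.card F

/-- The multiset of the `q` points of an affine line, each with multiplicity one. -/
def affLine [Fintype F] (d : Option F) (b : F) : Multiset (F × F) :=
  (Finset.univ.filter (onAffLine d b)).val

/-- The projection function of `M` from direction `d`: the unique polynomial of degree
at most `q - 1` whose value at each `b` is the number of points of `M` on the
corresponding line reduced modulo `p` (viewed in the prime subfield of `F`). -/
def prPoly [Fintype F] (M : Multiset (F × F)) (d : Option F) : F[X] :=
  Lagrange.interpolate Finset.univ id (fun b => (lineCount M d b : F))

/-- Points of `PG(2,q)`: 1-dimensional subspaces of `F³`. -/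
abbrev PGPoint (F : Type) [Field F] := Projectivization F (Fin 3 → F)

instance (F : Type) [Field F] [Fintype F] : Finite (PGPoint F) := Quotient.finite _

variable {F : Type} [Field F]

/-- Incidence between a line with dual coordinates `l` and a point `P` of `PG(2,q)`. -/
def PGIncident (l P : PGPoint F) : Prop := ∑ i, l.rep i * P.rep i = 0

/-- The number of points of the multiset `M`, counted with multiplicity, on the line `l`. -/
def lineMeets (M : Multiset (PGPoint F)) (l : PGPoint F) : ℕ :=
  Multiset.countP (PGIncident l) M

/-- The multiset of all points of the line `l`, each with multiplicity one. -/
def pgLinePts [Fintype F] (l : PGPoint F) : Multiset (PGPoint F) :=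
  (Set.toFinite {P | PGIncident l P}).toFinset.val

/-- The characteristic function (with values in `𝔽_p`) of the line `l`. -/
def chi (p : ℕ) (l : PGPoint F) : PGPoint F → ZMod p :=
  fun P => if PGIncident l P then 1 else 0

/-- The code `C(2,q)`: the `𝔽_p`-linear span of the characteristic functions of lines. -/
def code (p : ℕ) (F : Type) [Field F] : Submodule (ZMod p) (PGPoint F → ZMod p) :=
  Submodule.span (ZMod p) (Set.range (chi p))

/-- The characteristic function (values in `𝔽_p`) of the line `[a, b, c]` of `PG(2,q)`. -/
def chiVec (p : ℕ) (a b c : F) : PGPoint F → ZMod p :=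
  fun P => if a * P.rep 0 + b * P.rep 1 + c * P.rep 2 = 0 then 1 else 0

/-- The characteristic function of the line `[1, d, 0]` (for `d = ∞`, the line `[0, 1, 0]`). -/
def dirChi (p : ℕ) (d : Option F) : PGPoint F → ZMod p :=
  match d with
  | some m => chiVec p 1 m 0
  | none => chiVec p 0 1 0

/-- The point `(d, -1, b)` of `PG(2,q)`. -/
def ptSlope (d b : F) : PGPoint F :=
  Projectivization.mk F ![d, -1, b] (fun hcon => by simpa using congrFun hcon 1)

/-- The point `(1, 0, b)` of `PG(2,q)`. -/
def ptInf (b : F) : PGPoint F :=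
  Projectivization.mk F ![1, 0, b] (fun hcon => by simpa using congrFun hcon 0)

/-- The point `(0, 0, 1)` of `PG(2,q)`. -/
def ptOrigin (F : Type) [Field F] : PGPoint F :=
  Projectivization.mk F ![0, 0, 1] (fun hcon => by simpa using congrFun hcon 2)

/-- `P` lies on the line `X + dY = 0` (for `d = ∞`, the line `Y = 0`). -/
def onDirLine (d : Option F) (P : PGPoint F) : Prop :=
  match d with
  | some m => P.rep 0 + m * P.rep 1 = 0
  | none => P.rep 1 = 0

/-- The point `(d, -1, b)`, read as `(1, 0, b)` when `d = ∞`. -/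
def dirPt (d : Option F) (b : F) : PGPoint F :=
  match d with
  | some m => ptSlope m b
  | none => ptInf b

/-- Linear equations on `Projectivization.rep` may be tested on any representative. -/
lemma lin_rep_iff (a b c : F) (v : Fin 3 → F) (hv : v ≠ 0) :
    a * (Projectivization.mk F v hv).rep 0 + b * (Projectivization.mk F v hv).rep 1 +
      c * (Projectivization.mk F v hv).rep 2 = 0 ↔ a * v 0 + b * v 1 + c * v 2 = 0 := by
  obtain ⟨u, hu⟩ := Projectivization.exists_smul_eq_mk_rep F v hv
  rw [← hu]
  have : a * (u • v) 0 + b * (u • v) 1 + c * (u • v) 2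
      = (u : F) * (a * v 0 + b * v 1 + c * v 2) := by
    simp only [Pi.smul_apply, Units.smul_def, smul_eq_mul]; ring
  rw [this]
  simp

lemma chiVec_mk (p : ℕ) (a b c : F) (v : Fin 3 → F) (hv : v ≠ 0) :
    chiVec p a b c (Projectivization.mk F v hv) =
      if a * v 0 + b * v 1 + c * v 2 = 0 then 1 else 0 := by
  unfold chiVec
  simp only [lin_rep_iff]

/-- The dual line `[x, y, 1]` passes through `dirPt d b` exactly when the affine point `(x, y)` lies
on the line with slope `d` and parameter `b`. -/
lemma chiVec_dirPt (p : ℕ) (d : Option F) (b : F) (P : F × F) :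
    chiVec p P.1 P.2 1 (dirPt d b) = if onAffLine d b P then 1 else 0 := by
  cases d with
  | none =>
    simp only [dirPt, ptInf, chiVec_mk]
    refine if_congr ?_ rfl rfl
    simp [onAffLine]
  | some m =>
    have : P.1 * m + -P.2 + b = 0 ↔ P.2 = m * P.1 + b := by
      constructor <;> intro h <;> linear_combination -h
    simp only [dirPt, ptSlope, chiVec_mk]
    refine if_congr ?_ rfl rfl
    simpa [onAffLine] using this

lemma dirChi_dirPt (p : ℕ) (d e : Option F) (b : F) :
    dirChi p e (dirPt d b) = if d = e then 1 else 0 := by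
  cases d <;> cases e <;>
    simp [dirPt, ptInf, ptSlope, dirChi, chiVec_mk, ← sub_eq_add_neg, sub_eq_zero]

lemma sum_chiVec_dirPt (p : ℕ) (M : Multiset (F × F)) (d : Option F) (b : F) :
    (M.map (fun xy => chiVec p xy.1 xy.2 1 (dirPt d b))).sum = (lineCount M d b : ZMod p) := by
  simp only [chiVec_dirPt, lineCount]
  induction M using Multiset.induction_on with
  | empty => simp
  | cons a M ih =>
    by_cases h : onAffLine d b a <;> simp [h, ih, add_comm]

lemma onDirLine_dirPt (d : Option F) (b : F) : onDirLine d (dirPt d b) := by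
  cases d with
  | none =>
    have := (lin_rep_iff 0 1 0 ![1, 0, b] (fun hcon => by simpa using congrFun hcon 0)).2
      (by simp)
    simpa [onDirLine, dirPt, ptInf] using this
  | some m =>
    have := (lin_rep_iff 1 m 0 ![m, -1, b] (fun hcon => by simpa using congrFun hcon 1)).2
      (by simp)
    simpa [onDirLine, dirPt, ptSlope] using this

lemma dirPt_ne_ptOrigin (d : Option F) (b : F) : dirPt d b ≠ ptOrigin F := by
  intro h
  cases d with
  | none =>
    simp only [dirPt, ptInf, ptOrigin, Projectivization.mk_eq_mk_iff'] at h
    obtain ⟨a, ha⟩ := h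
    simpa using congrFun ha 0
  | some m =>
    simp only [dirPt, ptSlope, ptOrigin, Projectivization.mk_eq_mk_iff'] at h
    obtain ⟨a, ha⟩ := h
    simpa using congrFun ha 1

lemma eq_origin_or_dirPt (Q : PGPoint F) : Q = ptOrigin F ∨ ∃ d b, Q = dirPt d b := by
  induction Q using Projectivization.ind with
  | h v hv =>
    by_cases h1 : v 1 = 0
    · by_cases h0 : v 0 = 0
      · left
        rw [ptOrigin, Projectivization.mk_eq_mk_iff']
        refine ⟨v 2, ?_⟩
        ext i; fin_cases i <;> simp [h0, h1]
      · right
        refine ⟨none, v 2 / v 0, ?_⟩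
        rw [dirPt, ptInf, Projectivization.mk_eq_mk_iff']
        refine ⟨v 0, ?_⟩
        ext i; fin_cases i <;> simp [h1]
        field_simp
    · right
      refine ⟨some (-(v 0 / v 1)), -(v 2 / v 1), ?_⟩
      rw [dirPt, ptSlope, Projectivization.mk_eq_mk_iff']
      refine ⟨-v 1, ?_⟩
      ext i; fin_cases i <;> simp <;> field_simp

lemma onDirLine_ptOrigin (d : Option F) : onDirLine d (ptOrigin F) := by
  have hne : (![0, 0, 1] : Fin 3 → F) ≠ 0 := fun hcon => by simpa using congrFun hcon 2
  cases d with
  | none => simpa [onDirLine, ptOrigin] using (lin_rep_iff 0 1 0 ![0, 0, 1] hne).2 (by simp)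
  | some m => simpa [onDirLine, ptOrigin] using (lin_rep_iff 1 m 0 ![0, 0, 1] hne).2 (by simp)

lemma chiVec_mem_code (p : ℕ) (a b c : F) (hne : ![a, b, c] ≠ 0) :
    chiVec p a b c ∈ code p F := by
  apply Submodule.subset_span
  refine ⟨Projectivization.mk F ![a, b, c] hne, ?_⟩
  ext P
  have := lin_rep_iff (P.rep 0) (P.rep 1) (P.rep 2) ![a, b, c] hne
  simp only [chi, chiVec, PGIncident, Fin.sum_univ_three]
  refine if_congr ?_ rfl rfl
  simp only [mul_comm (P.rep _)] at this
  simpa using this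

lemma dirChi_mem_code (p : ℕ) (d : Option F) : dirChi p d ∈ code p F := by
  cases d with
  | none => exact chiVec_mem_code p 0 1 0 (fun hcon => by simpa using congrFun hcon 1)
  | some m => exact chiVec_mem_code p 1 m 0 (fun hcon => by simpa using congrFun hcon 0)

/-- The lines with a fixed slope partition the plane. -/
lemma sum_lineCount [Fintype F] (M : Multiset (F × F)) (d : Option F) :
    ∑ b, lineCount M d b = Multiset.card M := by
  induction M using Multiset.induction_on with
  | empty => simp [lineCount]
  | cons a M ih =>
    have key : ∃ b₀, ∀ b, onAffLine d b a ↔ b = b₀ := by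
      cases d with
      | none =>
        exact ⟨-a.1, fun b => by
          simp only [onAffLine]; constructor <;> intro h <;> linear_combination h⟩
      | some m =>
        exact ⟨a.2 - m * a.1, fun b => by
          simp only [onAffLine]; constructor <;> intro h <;> linear_combination -h⟩
    obtain ⟨b₀, hb⟩ := key
    simp only [lineCount] at ih
    simp [lineCount, Multiset.countP_cons, Finset.sum_add_distrib, ih, hb]

/-- Modulo `p`, the lines through the affine origin cover every point once: the origin itself is
covered `q + 1 ≡ 1` times. -/
lemma sum_lineCount_zero (p : ℕ) [Fintype F] (hq : (Fintype.card F : ZMod p) = 0)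
    (M : Multiset (F × F)) :
    ∑ d, (lineCount M d 0 : ZMod p) = Multiset.card M := by
  induction M using Multiset.induction_on with
  | empty => simp [lineCount]
  | cons a M ih =>
    have key : ∑ d : Option F, (if onAffLine d 0 a then (1 : ZMod p) else 0) = 1 := by
      rw [Fintype.sum_option]
      obtain ⟨x, y⟩ := a
      simp only [onAffLine, add_zero]
      by_cases hx : x = 0
      · by_cases hy : y = 0
        · simp [hx, hy, hq]
        · simp [hx, hy]
      · have : ∀ m : F, y = m * x ↔ m = y / x := fun m => by
          rw [eq_div_iff hx, eq_comm]
        simp [hx, this]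
    simp only [lineCount] at ih
    simp [lineCount, Multiset.countP_cons, Finset.sum_add_distrib, ih, key]

/-- If no direction is mod-special then the constants `r d` sum to zero. Counting along the lines of
one slope gives `|M| ≡ q * r d ≡ 0`, counting along the lines through the affine origin gives
`|M| ≡ ∑ r d`. -/
lemma sum_r_eq_zero (p : ℕ) [Fintype F] (hq : (Fintype.card F : ZMod p) = 0)
    (M : Multiset (F × F)) (r : Option F → ZMod p)
    (hr : ∀ d b, (lineCount M d b : ZMod p) = r d) : ∑ d, r d = 0 := by
  have h1 := sum_lineCount_zero p hq M
  have h2 := congrArg (Nat.cast : ℕ → ZMod p) (sum_lineCount M none)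
  push_cast at h2
  simp only [hr] at h1 h2
  rw [h1, ← h2]
  simp [hq]

lemma prPoly_eval [Fintype F] (M : Multiset (F × F)) (d : Option F) (b : F) :
    (prPoly M d).eval b = lineCount M d b := by
  have := Lagrange.eval_interpolate_at_node (s := (Finset.univ : Finset F)) (v := id)
    (fun b => (lineCount M d b : F)) (fun _ _ _ _ h => h) (Finset.mem_univ b)
  simpa [prPoly] using this

theorem stmt16 (p h : ℕ) [Fact p.Prime] (hh : 1 ≤ h)
    (F : Type) [Field F] [Fintype F] [CharP F p] (hcard : Fintype.card F = p ^ h)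
    (M : Multiset (F × F)) (r : Option F → ZMod p)
    (hr : ∀ d : Option F, ¬ IsModSpecial p M d →
      ∀ b : F, (lineCount M d b : ZMod p) = r d) :
    let cM : PGPoint F → ZMod p := fun Q =>
      (M.map (fun xy => chiVec p xy.1 xy.2 1 Q)).sum -
        ∑ d ∈ Finset.univ.filter (fun d : Option F => ¬ IsModSpecial p M d),
          r d * dirChi p d Q
    (∀ d b : F,
        (IsModSpecial p M (some d) →
          ZMod.castHom (dvd_refl p) F (cM (ptSlope d b)) = (prPoly M (some d)).eval b) ∧
        (¬ IsModSpecial p M (some d) → cM (ptSlope d b) = 0)) ∧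
      (∀ b : F,
        (IsModSpecial p M none →
          ZMod.castHom (dvd_refl p) F (cM (ptInf b)) = (prPoly M none).eval b) ∧
        (¬ IsModSpecial p M none → cM (ptInf b) = 0)) ∧
      cM ∈ code p F ∧
      (∀ Q : PGPoint F, cM Q ≠ 0 → ∃ d : Option F, IsModSpecial p M d ∧ onDirLine d Q) ∧
      (∀ d : Option F, IsModSpecial p M d →
        ¬ ∃ k : ZMod p, ∀ Q : PGPoint F, onDirLine d Q → Q ≠ ptOrigin F → cM Q = k) := by
  intro cM
  have hq : (Fintype.card F : ZMod p) = 0 := by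
    rw [hcard]; push_cast; rw [CharP.cast_eq_zero, zero_pow (by omega)]
  have hval : ∀ d b, cM (dirPt d b) =
      if IsModSpecial p M d then (lineCount M d b : ZMod p) else 0 := by
    intro d b
    simp only [cM, sum_chiVec_dirPt, dirChi_dirPt, mul_ite, mul_one, mul_zero,
      Finset.sum_ite_eq, Finset.mem_filter, Finset.mem_univ, true_and]
    by_cases hd : IsModSpecial p M d
    · simp [hd]
    · simp [hd, hr d hd b]
  have hspec : ∀ d b,
      (IsModSpecial p M d →
        ZMod.castHom (dvd_refl p) F (cM (dirPt d b)) = (prPoly M d).eval b) ∧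
      (¬ IsModSpecial p M d → cM (dirPt d b) = 0) := by
    intro d b
    refine ⟨fun hd => ?_, fun hd => ?_⟩
    · rw [hval, if_pos hd, prPoly_eval, map_natCast]
    · rw [hval, if_neg hd]
  refine ⟨fun d b => hspec (some d) b, fun b => hspec none b, ?_, ?_, ?_⟩
  · have hcM : cM = (M.map (fun xy => chiVec p xy.1 xy.2 1)).sum -
        ∑ d ∈ Finset.univ.filter (fun d : Option F => ¬ IsModSpecial p M d),
          r d • dirChi p d := by
      ext Q
      have : ∀ N : Multiset (F × F), (N.map (fun xy => chiVec p xy.1 xy.2 1)).sum Q =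
          (N.map (fun xy => chiVec p xy.1 xy.2 1 Q)).sum := by
        intro N
        induction N using Multiset.induction_on with
        | empty => simp
        | cons a N ih => simp [ih]
      simp [cM, this]
    rw [hcM]
    refine Submodule.sub_mem _ (multiset_sum_mem _ ?_)
      (Submodule.sum_mem _ fun d _ => Submodule.smul_mem _ _ (dirChi_mem_code p d))
    intro f hf
    obtain ⟨xy, _, rfl⟩ := Multiset.mem_map.1 hf
    exact chiVec_mem_code p _ _ _ (fun hcon => by simpa using congrFun hcon 2)
  · intro Q hQ
    rcases eq_origin_or_dirPt Q with rfl | ⟨d, b, rfl⟩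
    · by_contra hno
      -- The origin lies on every direction line, so there is no special direction at all;
      -- in that case `cM` vanishes at the origin.
      have hall : ∀ d, ¬ IsModSpecial p M d := fun d hd =>
        hno ⟨d, hd, onDirLine_ptOrigin d⟩
      apply hQ
      have hdir : ∀ d, dirChi p d (ptOrigin F) = 1 := by
        intro d
        cases d <;> simp [dirChi, ptOrigin, chiVec_mk]
      have hpt : ∀ x y : F, chiVec p x y 1 (ptOrigin F) = 0 := by
        intro x y
        simp [ptOrigin, chiVec_mk]
      have hsum := sum_r_eq_zero p hq M r (fun d => hr d (hall d))
      simp only [cM, hdir, hpt, hall, not_false_eq_true, Finset.filter_true, mul_one, hsum]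
      simp
    · refine ⟨d, ?_, onDirLine_dirPt d b⟩
      by_contra hd
      exact hQ ((hspec d b).2 hd)
  · rintro d hd ⟨k, hk⟩
    have hc : ∀ b, (lineCount M d b : ZMod p) = k := fun b => by
      rw [← hk _ (onDirLine_dirPt d b) (dirPt_ne_ptOrigin d b), hval, if_pos hd]
    exact hd fun b₁ b₂ => by rw [hc, hc]

end
end

section
/- Let p > 2 be prime. Then the set S = {(x,y) ∈ 𝔽_p² : ν(y) < ν(x)} of points of AG(2,p) has exactly 3 special directions. -/
/-!
The set `S` has `p(p-1)/2` points, so a direction is equidistributed exactly when each of its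
lines carries `(p-1)/2` points of `S`. Write `ν` for `ZMod.val`, and `T = ∑ ν(x) = p(p-1)/2`.

Everything rests on the identity `ν(y) + p·[ν(y) < ν(x)] = ν(x) + ν(y - x)`, which says that the
indicator of `S` is the borrow in the subtraction `y - x`. For `y = m x + b` with `m ≠ 0, 1` both
`x ↦ y` and `x ↦ y - x` permute `𝔽_p`; summing over `x` gives `T + p·N = T + T` for the number `N`
of points of `S` on the line, so `N = (p-1)/2` (`card_line`). Summing over all pairs gives
`|S| = T` (`card_points`).

The directions `∞`, `0` and `1` are special, because of the lines `x = 0` (no points),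
`y = 0` (`p - 1` points) and `y = x` (no points).
-/

attribute [local instance] Classical.propDecidable

noncomputable section

open Polynomial

variable {F : Type} [Field F]

/-- The indicator of `ν(y) < ν(x)` is the borrow in the subtraction `y - x`. -/
lemma val_add_borrow (p : ℕ) [Fact p.Prime] (x y : ZMod p) :
    y.val + p * (if y.val < x.val then 1 else 0) = x.val + (y - x).val := by
  have hx := ZMod.val_lt x
  split_ifs with h
  · have h1 : (x - y).val = x.val - y.val := ZMod.val_sub h.le
    have h2 : x - y ≠ 0 := by
      intro h0
      rw [h0, ZMod.val_zero] at h1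
      omega
    have h3 : (y - x).val = p - (x - y).val := by
      rw [← neg_sub x y, ZMod.neg_val, if_neg h2]
    omega
  · have h1 : (y - x).val = y.val - x.val := ZMod.val_sub (not_lt.mp h)
    omega

lemma two_mul_sum_val (p : ℕ) [Fact p.Prime] :
    2 * ∑ x : ZMod p, x.val = p * (p - 1) := by
  obtain ⟨n, rfl⟩ : ∃ n, p = n + 1 :=
    ⟨p - 1, (Nat.succ_pred_prime Fact.out).symm⟩
  have h : ∑ x : ZMod (n + 1), x.val = ∑ i ∈ Finset.range (n + 1), i :=
    Fin.sum_univ_eq_sum_range (fun i => i) (n + 1)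
  rw [h, mul_comm, Finset.sum_range_id_mul_two]

lemma sum_val_affine (p : ℕ) [Fact p.Prime] (m b : ZMod p) (hm : m ≠ 0) :
    ∑ x : ZMod p, (m * x + b).val = ∑ x : ZMod p, x.val :=
  Fintype.sum_bijective (fun x => m * x + b)
    (((Equiv.mulLeft₀ m hm).trans (Equiv.addRight b)).bijective) _ _ (fun _ => rfl)

lemma card_line (p : ℕ) [Fact p.Prime] (m b : ZMod p) (h0 : m ≠ 0) (h1 : m ≠ 1) :
    p * (Finset.univ.filter (fun x : ZMod p => (m * x + b).val < x.val)).card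
      = ∑ x : ZMod p, x.val := by
  have h := Finset.sum_congr (rfl : (Finset.univ : Finset (ZMod p)) = Finset.univ)
    (fun x _ => val_add_borrow p x (m * x + b))
  have h2 : ∑ x : ZMod p, (m * x + b - x).val = ∑ x : ZMod p, x.val := by
    rw [← sum_val_affine p (m - 1) b (sub_ne_zero.mpr h1)]
    exact Finset.sum_congr rfl (fun x _ => by congr 1; ring)
  rw [Finset.sum_add_distrib, Finset.sum_add_distrib, h2, sum_val_affine p m b h0,
    ← Finset.mul_sum, Finset.sum_boole] at h
  exact Nat.add_left_cancel h

lemma card_points (p : ℕ) [Fact p.Prime] :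
    (Finset.univ.filter (fun P : ZMod p × ZMod p => P.2.val < P.1.val)).card
      = ∑ x : ZMod p, x.val := by
  have h := Finset.sum_congr (rfl : (Finset.univ : Finset (ZMod p × ZMod p)) = Finset.univ)
    (fun P _ => val_add_borrow p P.1 P.2)
  have hsub : ∀ x : ZMod p, ∑ y : ZMod p, (y - x).val = ∑ y : ZMod p, y.val := fun x => by
    simpa [sub_eq_add_neg] using sum_val_affine p 1 (-x) one_ne_zero
  rw [Finset.sum_add_distrib, Finset.sum_add_distrib, ← Finset.mul_sum, Finset.sum_boole] at h
  simp only [Fintype.sum_prod_type, hsub, Finset.sum_const, Finset.card_univ, ZMod.card,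
    smul_eq_mul, ← Finset.mul_sum, Nat.cast_id] at h
  exact Nat.eq_of_mul_eq_mul_left (Fact.out : p.Prime).pos (Nat.add_left_cancel h)

lemma lineCount_some (p : ℕ) [Fact p.Prime] (m b : ZMod p) :
    lineCount (Finset.univ.filter (fun P : ZMod p × ZMod p => P.2.val < P.1.val)).val (some m) b
      = (Finset.univ.filter (fun x : ZMod p => (m * x + b).val < x.val)).card := by
  rw [lineCount, Multiset.countP_eq_card_filter, ← Finset.filter_val, Finset.card_val]
  symm
  refine Finset.card_bij (fun x _ => (x, m * x + b)) ?_ ?_ ?_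
  · intro x hx
    simpa [onAffLine] using hx
  · intro x _ y _ h
    exact (Prod.ext_iff.mp h).1
  · rintro ⟨x, y⟩ h
    simp only [Finset.mem_filter, Finset.mem_univ, true_and, onAffLine] at h
    obtain ⟨h, rfl⟩ := h
    exact ⟨x, by simpa using h, rfl⟩

/-- Since `p` divides `|S|`, the floor and the ceiling of `|S| / p` agree, and a direction is
special iff some line does not carry exactly `(p-1)/2` points. -/
lemma isSpecial_iff (p : ℕ) [Fact p.Prime] (hp : 2 < p) (d : Option (ZMod p)) :
    IsSpecial (Finset.univ.filter (fun P : ZMod p × ZMod p => P.2.val < P.1.val)).val d ↔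
      ∃ b, 2 * lineCount
        (Finset.univ.filter (fun P : ZMod p × ZMod p => P.2.val < P.1.val)).val d b ≠ p - 1 := by
  have hodd : p % 2 = 1 := (Fact.out : p.Prime).eq_two_or_odd.resolve_left (by omega)
  obtain ⟨k, hk⟩ : ∃ k, p = 2 * k + 1 := ⟨p / 2, by omega⟩
  have hc : (Finset.univ.filter (fun P : ZMod p × ZMod p => P.2.val < P.1.val)).card
      = p * k := by
    have h := two_mul_sum_val p
    rw [← card_points, show p - 1 = 2 * k by omega] at h
    linarith
  have hceil : (p * k + p - 1) / p = k := by
    rw [Nat.add_sub_assoc (by omega), Nat.mul_add_div (by omega),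
      Nat.div_eq_of_lt (by omega), add_zero]
  rw [IsSpecial, Finset.card_val, hc, ZMod.card, hceil, Nat.mul_div_cancel_left _ (by omega)]
  push Not
  refine exists_congr fun b => ?_
  omega

theorem stmt18 (p : ℕ) [Fact p.Prime] (hp : 2 < p) :
    let S : Multiset (ZMod p × ZMod p) :=
      (Finset.univ.filter (fun P : ZMod p × ZMod p => P.2.val < P.1.val)).val
    (Finset.univ.filter (fun d : Option (ZMod p) => IsSpecial S d)).card = 3 := by
  intro S
  have key : Finset.univ.filter (fun d : Option (ZMod p) => IsSpecial S d)
      = {none, some 0, some 1} := by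
    ext d
    simp only [Finset.mem_filter, Finset.mem_univ, true_and, Finset.mem_insert,
      Finset.mem_singleton]
    rw [isSpecial_iff p hp]
    constructor
    · rintro ⟨b, hb⟩
      rcases d with _ | m
      · exact Or.inl rfl
      by_contra! hne
      have h0 : m ≠ 0 := fun h => hne.2.1 (by rw [h])
      have h1 : m ≠ 1 := fun h => hne.2.2 (by rw [h])
      refine hb ?_
      rw [lineCount_some]
      refine Nat.eq_of_mul_eq_mul_left (show 0 < p by omega) ?_
      rw [← two_mul_sum_val, ← card_line p m b h0 h1]
      ring
    · rintro (rfl | rfl | rfl)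
      · refine ⟨0, ?_⟩
        have : lineCount S none 0 = 0 := by
          rw [lineCount, Multiset.countP_eq_zero]
          rintro ⟨x, y⟩ hP hx
          have hx' : x = 0 := by simpa [onAffLine] using hx
          simp [S, hx'] at hP
        rw [this]
        omega
      · refine ⟨0, ?_⟩
        have : (Finset.univ.filter (fun x : ZMod p => (0 * x + 0).val < x.val)).card = p - 1 := by
          have he : Finset.univ.filter (fun x : ZMod p => (0 * x + 0).val < x.val)
              = Finset.univ.erase 0 := by
            ext x
            simp [Nat.pos_iff_ne_zero]
          rw [he, Finset.card_erase_of_mem (Finset.mem_univ _), Finset.card_univ, ZMod.card]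
        rw [lineCount_some, this]
        omega
      · refine ⟨0, ?_⟩
        rw [lineCount_some]
        simp
        omega
  rw [key]
  rw [Finset.card_insert_of_notMem (by simp), Finset.card_pair (by simp)]

end
end

section
/- Suppose p ≥ 37 is prime and c ∈ C(2,p) satisfies wt(c) ≤ 4p + 3 if p ≤ 47, and wt(c) ≤ 5p − 36 if p ≥ 53. Then at least one of the following holds: (1) c is an 𝔽_p-linear combination of the characteristic functions of at most 4 lines; (2) c is the sum of an odd codeword on 3 lines and an 𝔽_p-scalar multiple of the characteristic function of one further line; (3) c is an odd codeword on 4 lines. -/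
/-!
The proof rests on a weight bound: a line with `s` support points of a codeword `c`, and at least
one point where `c` vanishes, forces `s * (p + 1 - s) ≤ wt(c)` (`line_weight_bound`). Choose an
affine chart in which the lines through such a zero `Q` are the rows. For a codeword, the `e`-th
moment `∑ x, c(x, y) * x ^ e` of row `y` is a polynomial in `y` of degree at most `e`
(`exists_moment_poly`; by linearity this need only be seen for a single line). So the `s × s`
Hankel determinant of the moments is a polynomial in `y` of degree at most `s * (s - 1)`. At the
given row it equals a nonzero product times the square of a Vandermonde determinant, and at a row
of weight `t` its matrix has rank at most `t`, so it vanishes there to order at least `s - t`.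
Counting roots gives the bound (`row_weight_bound`).

Both weight hypotheses imply `wt(c) ≤ 5 * p - 26`, as there is no prime strictly between `47` and
`53`. The bound then shows that every line has at most `4` or at least `p - 3` support points
(`short_or_long`). Every support point lies on a line of the second kind: otherwise the heaviest
line through it, with `m ≤ 4` support points, would give `p ≤ m ^ 2` (`exists_long_line`). Five
long lines would contain at least `5 * (p - 3) - 10` support points, so there are at most four
(`card_long_le`).

Hence the support is contained in the union of four distinct lines, and `four_lines` distinguishes
their possible positions. For concurrent lines, either `c` is odd or a multiple of one of the lines
can be subtracted. If exactly three pass through `P`, a multiple of the fourth can be subtracted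
because all line sums of `c` agree (`cone_peel`). If no three are concurrent, the first moments show
that `c` is constant on the fourth line off the triangle formed by the others (`four_general`).
-/

attribute [local instance] Classical.propDecidable

noncomputable section

variable {F : Type} [Field F]

/-- `c` is an odd codeword on the `n` distinct lines `l 0, …, l (n-1)` which are
concurrent at the point `P`: the support of `c` is contained in their union, and
`c` is not constant on any `l i` minus `P`. (Membership of `c` in the code is a
separate hypothesis.) -/
def IsOddOn (p : ℕ) {F : Type} [Field F] (c : PGPoint F → ZMod p) (n : ℕ)
    (l : Fin n → PGPoint F) (P : PGPoint F) : Prop :=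
  Function.Injective l ∧ (∀ i, PGIncident (l i) P) ∧
    (∀ Q, c Q ≠ 0 → ∃ i, PGIncident (l i) Q) ∧
    (∀ i, ¬ ∃ k : ZMod p, ∀ Q, PGIncident (l i) Q → Q ≠ P → c Q = k)

/-! ### Hankel determinants of moments -/

open Polynomial Finset in
lemma natDegree_det_hankel_le {F : Type} [Field F] (n : ℕ) (g : ℕ → F[X])
    (hg : ∀ e, (g e).natDegree ≤ e) :
    (Matrix.det (Matrix.of fun i j : Fin n => g (i + j))).natDegree ≤ n * (n - 1) := by
  rw [Matrix.det_apply]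
  refine natDegree_sum_le_of_forall_le _ _ fun σ _ => ?_
  have h1 : (∏ i, (Matrix.of fun i j : Fin n => g (i + j)) (σ i) i).natDegree ≤ n * (n - 1) := by
    refine (natDegree_prod_le _ _).trans ?_
    calc ∑ i : Fin n, (g ((σ i : ℕ) + i)).natDegree
        ≤ ∑ i : Fin n, ((σ i : ℕ) + i) := Finset.sum_le_sum fun i _ => hg _
      _ = n * (n - 1) := by
          rw [Finset.sum_add_distrib, Equiv.sum_comp σ (fun i : Fin n => (i : ℕ)),
            Fin.sum_univ_eq_sum_range (fun i => i) n, ← mul_two, Finset.sum_range_id_mul_two]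
  rcases Int.units_eq_one_or (Equiv.Perm.sign σ) with h | h <;> rw [h]
  · simpa using h1
  · simpa using h1

/-- If a Hankel matrix of polynomials specialises at `y` to the moment matrix of a weight function
`h` with `s` nonzero values, then its determinant vanishes at `y` to order at least `n - s`: that
moment matrix has rank at most `s`. -/
lemma pow_dvd_det_hankel {F : Type} [Field F] [Fintype F] (n : ℕ)
    (g : ℕ → Polynomial F) (y : F) (h : F → F)
    (hg : ∀ e, (g e).eval y = ∑ x, h x * x ^ e) :
    (Polynomial.X - Polynomial.C y) ^ (n - (Finset.univ.filter fun x => h x ≠ 0).card) ∣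
      Matrix.det (Matrix.of fun i j : Fin n => g (i + j)) := by
  set S := Finset.univ.filter fun x => h x ≠ 0 with hS
  set s := S.card with hs
  set H : Matrix (Fin n) (Fin n) (Polynomial F) := Matrix.of fun i j : Fin n => g (i + j) with hH
  set π : Polynomial F := ∏ x ∈ S, (Polynomial.X - Polynomial.C x) with hπ
  have hπm : π.Monic := Polynomial.monic_prod_of_monic _ _ fun x _ => Polynomial.monic_X_sub_C x
  have hπd : π.natDegree = s := by
    rw [hπ, Polynomial.natDegree_prod_of_monic _ _ fun x _ => Polynomial.monic_X_sub_C x]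
    simp [hs]
  have hm : ∀ k, (Polynomial.X ^ k * π).Monic := fun k => (Polynomial.monic_X_pow k).mul hπm
  have hd : ∀ k, (Polynomial.X ^ k * π).natDegree = k + s := fun k => by
    rw [(Polynomial.monic_X_pow k).natDegree_mul hπm, hπd, Polynomial.natDegree_X_pow]
  -- Column operations: column `j ≥ s` is replaced by the moments of `h` against `X ^ (j - s) * π`.
  let P : Matrix (Fin n) (Fin n) (Polynomial F) := Matrix.of fun i j =>
    if (j : ℕ) < s then (if i = j then 1 else 0)
    else Polynomial.C ((Polynomial.X ^ ((j : ℕ) - s) * π).coeff i)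
  have hP : P.det = 1 := by
    have ht : P.BlockTriangular id := by
      intro i j hij
      simp only [id] at hij
      simp only [P, Matrix.of_apply]
      split_ifs with h1 h2
      · exact absurd h2 hij.ne'
      · rfl
      · rw [Polynomial.coeff_eq_zero_of_natDegree_lt, Polynomial.C_0]
        rw [hd]
        have : (j : ℕ) < i := hij
        omega
    have := Matrix.det_of_isUpperTriangular ht
    refine Eq.trans ?_ (this.trans ?_)
    · congr!
    · refine Finset.prod_eq_one fun j _ => ?_
      simp only [P, Matrix.of_apply]
      split_ifs with h1
      · rfl
      · have := (hm ((j : ℕ) - s)).coeff_natDegree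
        rw [hd, Nat.sub_add_cancel (not_lt.mp h1)] at this
        rw [this, Polynomial.C_1]
  let d : Fin n → Polynomial F := fun j =>
    if (j : ℕ) < s then 1 else Polynomial.X - Polynomial.C y
  have hdvd : ∀ i j, ∃ G, (H * P) i j = G * d j := by
    intro i j
    simp only [d]
    split_ifs with h1
    · exact ⟨_, (mul_one _).symm⟩
    · suffices Polynomial.X - Polynomial.C y ∣ (H * P) i j by
        obtain ⟨G, hG⟩ := this
        exact ⟨G, by rw [hG, mul_comm]⟩
      rw [Polynomial.dvd_iff_isRoot, Polynomial.IsRoot.def, Matrix.mul_apply,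
        Polynomial.eval_finsetSum]
      set Q := Polynomial.X ^ ((j : ℕ) - s) * π with hQ
      have hQn : Q.natDegree < n := by rw [hd]; have := j.2; omega
      have h2 : ∀ k : Fin n, ((H i k) * (P k j)).eval y
          = ∑ x, h x * x ^ (i : ℕ) * (Q.coeff k * x ^ (k : ℕ)) := by
        intro k
        simp only [P, H, Matrix.of_apply, if_neg h1, Polynomial.eval_mul, Polynomial.eval_C, hg,
          Finset.sum_mul]
        refine Finset.sum_congr rfl fun x _ => ?_
        ring
      rw [Finset.sum_congr rfl fun k _ => h2 k, Finset.sum_comm]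
      refine Finset.sum_eq_zero fun x _ => ?_
      rw [← Finset.mul_sum, Fin.sum_univ_eq_sum_range (fun k => Q.coeff k * x ^ k) n,
        ← Polynomial.eval_eq_sum_range' hQn]
      by_cases hx : h x = 0
      · simp [hx]
      · have : π.eval x = 0 := by
          rw [hπ, Polynomial.eval_prod]
          exact Finset.prod_eq_zero (i := x) (by simp [hS, hx]) (by simp)
        simp [hQ, this]
  choose G hG using hdvd
  have hHP : H * P = Matrix.of G * Matrix.diagonal d := by
    ext1 i j
    rw [hG, Matrix.mul_diagonal, Matrix.of_apply]
  have hdet : H.det = (Matrix.of G).det * ∏ j, d j := by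
    rw [← mul_one H.det, ← hP, ← Matrix.det_mul, hHP, Matrix.det_mul, Matrix.det_diagonal]
  rw [hdet]
  refine Dvd.dvd.mul_left ?_ _
  have hprod : ∏ j, d j
      = (Polynomial.X - Polynomial.C y) ^ (Finset.univ.filter fun j : Fin n => ¬ (j : ℕ) < s).card := by
    simp only [d]
    rw [Finset.prod_ite, Finset.prod_const_one, one_mul, Finset.prod_const]
  rw [hprod]
  refine pow_dvd_pow _ ?_
  have h3 := Finset.card_filter_add_card_filter_not (s := (Finset.univ : Finset (Fin n)))
    (fun j : Fin n => (j : ℕ) < s)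
  have h4 : (Finset.univ.filter fun j : Fin n => (j : ℕ) < s).card ≤ s := by
    calc _ ≤ (Finset.range s).card := by
          refine Finset.card_le_card_of_injOn (fun j : Fin n => (j : ℕ)) ?_ ?_
          · intro j hj
            simpa using hj
          · intro a _ b _ hab
            exact Fin.ext hab
      _ = s := Finset.card_range s
  rw [Finset.card_univ, Fintype.card_fin] at h3
  omega

/-- At a row of weight exactly `n` the Hankel matrix factors as `Vᵀ * D * V`, with `V` the Vandermonde
matrix of the support and `D` the invertible diagonal matrix of the values. -/
lemma eval_det_hankel_ne_zero {F : Type} [Field F] [Fintype F] (n : ℕ)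
    (g : ℕ → Polynomial F) (y : F) (h : F → F)
    (hg : ∀ e, (g e).eval y = ∑ x, h x * x ^ e)
    (hn : (Finset.univ.filter fun x => h x ≠ 0).card = n) :
    (Matrix.det (Matrix.of fun i j : Fin n => g (i + j))).eval y ≠ 0 := by
  set S := Finset.univ.filter fun x => h x ≠ 0 with hS
  let e : Fin n ≃ S := (Fintype.equivFinOfCardEq (by rw [Fintype.card_coe, hn])).symm
  let v : Fin n → F := fun k => (e k : F)
  have hv : Function.Injective v := Subtype.val_injective.comp e.injective
  have hne : ∀ k, h (v k) ≠ 0 := fun k => (Finset.mem_filter.mp (e k).2).2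
  have hM : (Polynomial.evalRingHom y).mapMatrix (Matrix.of fun i j : Fin n => g (i + j))
      = (Matrix.vandermonde v).transpose * Matrix.diagonal (fun k => h (v k))
        * Matrix.vandermonde v := by
    ext1 i j
    rw [RingHom.mapMatrix_apply, Matrix.map_apply, Matrix.of_apply, Polynomial.coe_evalRingHom, hg,
      Matrix.mul_apply]
    have h1 : ∑ x, h x * x ^ ((i : ℕ) + j) = ∑ x ∈ S, h x * x ^ ((i : ℕ) + j) := by
      symm
      refine Finset.sum_subset (Finset.subset_univ _) fun x _ hx => ?_
      have : h x = 0 := by simpa [hS] using hx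
      simp [this]
    rw [h1, ← Finset.sum_coe_sort, ← e.sum_comp]
    refine Finset.sum_congr rfl fun k _ => ?_
    rw [Matrix.mul_diagonal, Matrix.transpose_apply, Matrix.vandermonde_apply,
      Matrix.vandermonde_apply]
    simp only [v]
    ring
  have h2 := RingHom.map_det (Polynomial.evalRingHom y) (Matrix.of fun i j : Fin n => g (i + j))
  rw [Polynomial.coe_evalRingHom] at h2
  rw [h2, hM, Matrix.det_mul, Matrix.det_mul, Matrix.det_transpose, Matrix.det_diagonal]
  have h3 : (Matrix.vandermonde v).det ≠ 0 := by
    have := (Matrix.det_vandermonde_ne_zero_iff (v := v)).mpr hv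
    convert this
  exact mul_ne_zero (mul_ne_zero h3 (Finset.prod_ne_zero_iff.mpr fun k _ => hne k)) h3

/-- The weight bound: if the `e`-th moments of the rows `h y` are given by a polynomial in `y` of
degree at most `e`, a row with `s` nonzero entries forces total weight at least
`s * (|F| + 1 - s)`. The Hankel determinant of order `s` has degree at most `s * (s - 1)`, does not
vanish at `y₀`, and vanishes at each `y` to order at least `s` minus the weight of row `y`. -/
lemma row_weight_bound {F : Type} [Field F] [Fintype F] (h : F → F → F) (g : ℕ → Polynomial F)
    (hd : ∀ e, (g e).natDegree ≤ e) (hg : ∀ e y, (g e).eval y = ∑ x, h y x * x ^ e) (y₀ : F) :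
    (Finset.univ.filter fun x => h y₀ x ≠ 0).card * (Fintype.card F + 1) ≤
      ∑ y, (Finset.univ.filter fun x => h y x ≠ 0).card
        + (Finset.univ.filter fun x => h y₀ x ≠ 0).card ^ 2 := by
  set n := (Finset.univ.filter fun x => h y₀ x ≠ 0).card with hn
  set D := Matrix.det (Matrix.of fun i j : Fin n => g (i + j)) with hD
  have hD0 : D ≠ 0 := by
    intro h0
    apply eval_det_hankel_ne_zero n g y₀ (h y₀) (fun e => hg e y₀) hn.symm
    rw [← hD, h0, Polynomial.eval_zero]
  have hmult : ∀ y, n - (Finset.univ.filter fun x => h y x ≠ 0).card ≤ D.roots.count y := by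
    intro y
    rw [Polynomial.count_roots, Polynomial.le_rootMultiplicity_iff hD0]
    exact pow_dvd_det_hankel n g y (h y) (fun e => hg e y)
  have hsum : ∑ y, D.roots.count y ≤ n * (n - 1) := by
    have : ∑ y, D.roots.count y = Multiset.card D.roots :=
      Multiset.sum_count_eq_card (fun a _ => Finset.mem_univ a)
    rw [this]
    exact (Polynomial.card_roots' D).trans (natDegree_det_hankel_le n g hd)
  have h1 : Fintype.card F * n ≤
      ∑ y, (Finset.univ.filter fun x => h y x ≠ 0).card + n * (n - 1) := by
    calc Fintype.card F * n = ∑ _y : F, n := by simp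
      _ ≤ ∑ y, ((Finset.univ.filter fun x => h y x ≠ 0).card + D.roots.count y) :=
          Finset.sum_le_sum fun y _ => by have := hmult y; omega
      _ ≤ _ := by rw [Finset.sum_add_distrib]; omega
  rcases n with _ | m
  · simp
  · simp only [Nat.add_sub_cancel] at h1
    nlinarith

/-! ### Incidence geometry and line sums -/

open Projectivization in
lemma incident_mk_iff {F : Type} [Field F] {v w : Fin 3 → F} (hv : v ≠ 0) (hw : w ≠ 0) :
    PGIncident (mk F v hv) (mk F w hw) ↔ ∑ i, v i * w i = 0 := by
  have h : PGIncident (mk F v hv) (mk F w hw) ↔ orthogonal (mk F v hv) (mk F w hw) := by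
    conv_rhs => rw [← mk_rep (mk F v hv), ← mk_rep (mk F w hw), orthogonal_mk]
    rfl
  rw [h, orthogonal_mk]
  rfl

lemma incident_iff_orthogonal {F : Type} [Field F] (l P : PGPoint F) :
    PGIncident l P ↔ Projectivization.orthogonal l P := by
  induction l using Projectivization.ind with | h v hv =>
  induction P using Projectivization.ind with | h w hw =>
  rw [incident_mk_iff, Projectivization.orthogonal_mk]
  rfl

open Projectivization in
lemma incident_mk_right {F : Type} [Field F] (l : PGPoint F) {w : Fin 3 → F} (hw : w ≠ 0) :
    PGIncident l (mk F w hw) ↔ ∑ i, l.rep i * w i = 0 := by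
  conv_lhs => rw [← mk_rep l]
  rw [incident_mk_iff]

lemma incident_comm {F : Type} [Field F] (l P : PGPoint F) :
    PGIncident l P ↔ PGIncident P l := by
  unfold PGIncident
  simp only [mul_comm]

lemma eq_or_eq_of_incident {F : Type} [Field F] {l m P Q : PGPoint F} (h1 : PGIncident l P)
    (h2 : PGIncident l Q) (h3 : PGIncident m P) (h4 : PGIncident m Q) : l = m ∨ P = Q := by
  rw [incident_iff_orthogonal] at *
  exact Configuration.ofField.eq_or_eq_of_orthogonal h1 h3 h2 h4

lemma exists_line_through {F : Type} [Field F] {P Q : PGPoint F} (h : P ≠ Q) :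
    ∃ l, PGIncident l P ∧ PGIncident l Q := by
  refine ⟨Projectivization.cross P Q, ?_, ?_⟩ <;> rw [incident_iff_orthogonal]
  · exact Projectivization.cross_orthogonal_left h
  · exact Projectivization.cross_orthogonal_right h

lemma exists_common_point {F : Type} [Field F] {l m : PGPoint F} (h : l ≠ m) :
    ∃ P, PGIncident l P ∧ PGIncident m P := by
  obtain ⟨P, h1, h2⟩ := exists_line_through h
  exact ⟨P, (incident_comm _ _).mp h1, (incident_comm _ _).mp h2⟩

lemma exists_not_incident {F : Type} [Field F] (l : PGPoint F) : ∃ P, ¬ PGIncident l P := by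
  obtain ⟨P, hP⟩ := Projectivization.exists_not_self_orthogonal l
  exact ⟨P, by rwa [incident_iff_orthogonal]⟩

noncomputable instance instFintypePGPoint (F : Type) [Field F] [Fintype F] :
    Fintype (PGPoint F) := Fintype.ofFinite _

/-- The set of points on a line. By the symmetry of incidence, this is also the set of lines
through a point. -/
def linePts {F : Type} [Field F] [Fintype F] (l : PGPoint F) : Finset (PGPoint F) :=
  Finset.univ.filter fun P => PGIncident l P

/-- The support of `c`. -/
def supp {p : ℕ} {F : Type} [Field F] [Fintype F] (c : PGPoint F → ZMod p) :
    Finset (PGPoint F) :=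
  Finset.univ.filter fun P => c P ≠ 0

lemma mem_linePts {F : Type} [Field F] [Fintype F] {l P : PGPoint F} :
    P ∈ linePts l ↔ PGIncident l P := by
  simp [linePts]

lemma mem_supp {p : ℕ} {F : Type} [Field F] [Fintype F] {c : PGPoint F → ZMod p}
    {P : PGPoint F} : P ∈ supp c ↔ c P ≠ 0 := by
  simp [supp]

open Configuration in
lemma card_linePts (p : ℕ) [Fact p.Prime] (l : PGPoint (ZMod p)) :
    (linePts l).card = p + 1 := by
  have h1 : Nat.card {P : PGPoint (ZMod p) // P ∈ l} = (linePts l).card := by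
    rw [Nat.card_eq_fintype_card, Fintype.card_subtype, linePts]
    congr 1
    ext P
    simp only [Finset.mem_filter, Finset.mem_univ, true_and]
    rw [incident_comm, incident_iff_orthogonal]
    rfl
  have h2 := ProjectivePlane.pointCount_eq (PGPoint (ZMod p)) l
  have h3 := ProjectivePlane.card_points (PGPoint (ZMod p)) (PGPoint (ZMod p))
  have h4 : Nat.card (PGPoint (ZMod p)) = p ^ 2 + p + 1 := by
    have := Projectivization.card_of_finrank (ZMod p) (Fin 3 → ZMod p) (n := 3) (by simp)
    rw [this]
    simp [Finset.sum_range_succ]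
    ring
  rw [← Nat.card_eq_fintype_card, h4] at h3
  rw [← h1]
  change pointCount _ l = _
  rw [h2]
  set o := ProjectivePlane.order (PGPoint (ZMod p)) (PGPoint (ZMod p))
  have : o = p := by
    rcases lt_trichotomy o p with h | h | h
    · nlinarith
    · exact h
    · nlinarith
  rw [this]

lemma eq_of_incident_of_ne {F : Type} [Field F] [Fintype F] {l m P : PGPoint F} (h : l ≠ m)
    (h1 : PGIncident l P) (h2 : PGIncident m P) {Q : PGPoint F} (h3 : PGIncident l Q)
    (h4 : PGIncident m Q) : Q = P :=
  (eq_or_eq_of_incident h3 h1 h4 h2).resolve_left h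

/-- All line sums of a codeword are equal. -/
lemma exists_lineSum {p : ℕ} [Fact p.Prime] {c : PGPoint (ZMod p) → ZMod p}
    (hc : c ∈ code p (ZMod p)) : ∃ k, ∀ l, ∑ P ∈ linePts l, c P = k := by
  induction hc using Submodule.span_induction with
  | mem x hx =>
    obtain ⟨m, rfl⟩ := hx
    refine ⟨1, fun l => ?_⟩
    simp only [chi]
    rw [Finset.sum_boole]
    by_cases h : l = m
    · subst h
      have : (linePts l).filter (fun P => PGIncident l P) = linePts l :=
        Finset.filter_true_of_mem fun P hP => mem_linePts.mp hP
      rw [this, card_linePts]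
      simp
    · obtain ⟨P, h1, h2⟩ := exists_common_point h
      have : (linePts l).filter (fun P => PGIncident m P) = {P} := by
        ext Q
        simp only [Finset.mem_filter, mem_linePts, Finset.mem_singleton]
        constructor
        · rintro ⟨h3, h4⟩
          exact eq_of_incident_of_ne h h1 h2 h3 h4
        · rintro rfl
          exact ⟨h1, h2⟩
      rw [this]
      simp
  | zero => exact ⟨0, fun l => by simp⟩
  | add x y _ _ hx hy =>
    obtain ⟨a, ha⟩ := hx
    obtain ⟨b, hb⟩ := hy
    exact ⟨a + b, fun l => by simp [Finset.sum_add_distrib, ha, hb]⟩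
  | smul r x _ hx =>
    obtain ⟨a, ha⟩ := hx
    exact ⟨r * a, fun l => by simp [← Finset.mul_sum, ha]⟩

/-! ### Moments of codewords in an affine chart -/

lemma affPt_ne_zero {F : Type} [Field F] {q r t : Fin 3 → F} (hI : LinearIndependent F ![q, r, t])
    (x y : F) : x • q + r + y • t ≠ 0 := by
  intro h
  have := Fintype.linearIndependent_iff.mp hI ![x, 1, y] (by simpa [Fin.sum_univ_three] using h) 1
  simp at this

/-- The affine chart attached to a basis `q, r, t`: the points off the line `qt`. The rows
`y = const` are the lines through `q` other than `qt`, with `q` removed. -/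
def affPt {F : Type} [Field F] {q r t : Fin 3 → F} (hI : LinearIndependent F ![q, r, t])
    (x y : F) : PGPoint F :=
  Projectivization.mk F (x • q + r + y • t) (affPt_ne_zero hI x y)

lemma incident_affPt {F : Type} [Field F] {q r t : Fin 3 → F}
    (hI : LinearIndependent F ![q, r, t]) (x y : F) (l : PGPoint F) :
    PGIncident l (affPt hI x y) ↔
      x * (∑ i, l.rep i * q i) + ∑ i, l.rep i * r i + y * (∑ i, l.rep i * t i) = 0 := by
  rw [affPt, incident_mk_right]
  simp only [Fin.sum_univ_three, Pi.add_apply, Pi.smul_apply, smul_eq_mul]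
  constructor <;> intro h <;> linear_combination h

lemma affPt_injective {F : Type} [Field F] {q r t : Fin 3 → F}
    (hI : LinearIndependent F ![q, r, t]) {x y x' y' : F} (h : affPt hI x y = affPt hI x' y') :
    x = x' ∧ y = y' := by
  rw [affPt, affPt, Projectivization.mk_eq_mk_iff'] at h
  obtain ⟨a, ha⟩ := h
  have := Fintype.linearIndependent_iff.mp hI ![a * x' - x, a - 1, a * y' - y] (by
    have h2 := sub_eq_zero.mpr ha
    rw [← h2]
    ext i
    simp [Fin.sum_univ_three]
    ring)
  have h0 := this 0
  have h1 := this 1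
  have h2 := this 2
  simp at h0 h1 h2
  have ha1 : a = 1 := sub_eq_zero.mp h1
  subst ha1
  constructor
  · linear_combination -h0
  · linear_combination -h2

/-- The `e`-th moments of the rows of a codeword in an affine chart are given by a polynomial of
degree at most `e` in the row index. -/
lemma exists_moment_poly {p : ℕ} [Fact p.Prime] {c : PGPoint (ZMod p) → ZMod p}
    (hc : c ∈ code p (ZMod p)) {q r t : Fin 3 → ZMod p}
    (hI : LinearIndependent (ZMod p) ![q, r, t]) (e : ℕ) :
    ∃ g : Polynomial (ZMod p), g.natDegree ≤ e ∧
      ∀ y, g.eval y = ∑ x, c (affPt hI x y) * x ^ e := by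
  induction hc using Submodule.span_induction with
  | mem x hx =>
    obtain ⟨l, rfl⟩ := hx
    simp only [chi, incident_affPt]
    set A := ∑ i, l.rep i * q i
    set B := ∑ i, l.rep i * r i
    set D := ∑ i, l.rep i * t i
    have hlin : ∀ u v : ZMod p, (Polynomial.C u + Polynomial.C v * Polynomial.X).natDegree ≤ 1 := by
      intro u v
      rw [add_comm]
      exact Polynomial.natDegree_linear_le
    by_cases hA : A = 0
    · -- The line passes through `q`: its affine part is a single row, or empty.
      have hsum : ∀ y, ∑ x : ZMod p, (if x * A + B + y * D = 0 then (1 : ZMod p) else 0) * x ^ e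
          = (if B + y * D = 0 then (1 : ZMod p) else 0) * ∑ x : ZMod p, x ^ e := by
        intro y
        simp only [hA, mul_zero, zero_add, ← Finset.mul_sum]
      by_cases he : e < p - 1
      · refine ⟨0, by simp, fun y => ?_⟩
        rw [hsum, FiniteField.sum_pow_lt_card_sub_one (ZMod p) e (by rwa [ZMod.card])]
        simp
      · refine ⟨(1 - (Polynomial.C B + Polynomial.C D * Polynomial.X) ^ (p - 1))
          * Polynomial.C (∑ x : ZMod p, x ^ e), ?_, fun y => ?_⟩
        · refine (Polynomial.natDegree_mul_C_le _ _).trans ?_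
          refine (Polynomial.natDegree_sub_le _ _).trans ?_
          simp only [Polynomial.natDegree_one, Nat.zero_max]
          refine (Polynomial.natDegree_pow_le_of_le (p - 1) (hlin B D)).trans ?_
          omega
        · rw [hsum]
          generalize ∑ x : ZMod p, x ^ e = σ
          have hp1 : p - 1 ≠ 0 := by have := (Fact.out : p.Prime).two_le; omega
          by_cases hz : B + y * D = 0
          · have : B + D * y = 0 := by rw [← hz]; ring
            simp [hz, this, hp1]
          · have : B + D * y ≠ 0 := by rwa [mul_comm D y]
            simp [hz, ZMod.pow_card_sub_one_eq_one this]
    · refine ⟨(Polynomial.C (-B / A) + Polynomial.C (-D / A) * Polynomial.X) ^ e, ?_, fun y => ?_⟩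
      · refine (Polynomial.natDegree_pow_le_of_le e (hlin _ _)).trans ?_
        omega
      · have : ∀ x : ZMod p, x * A + B + y * D = 0 ↔ x = -B / A + -D / A * y := by
          intro x
          constructor
          · intro h
            field_simp
            linear_combination h
          · rintro rfl
            field_simp
            ring
        simp [this]
  | zero => exact ⟨0, by simp, fun y => by simp⟩
  | add u v _ _ hu hv =>
    obtain ⟨a, ha, ha'⟩ := hu
    obtain ⟨b, hb, hb'⟩ := hv
    refine ⟨a + b, (Polynomial.natDegree_add_le _ _).trans (max_le ha hb), fun y => ?_⟩
    simp [ha', hb', Finset.sum_add_distrib, add_mul]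
  | smul k u _ hu =>
    obtain ⟨a, ha, ha'⟩ := hu
    refine ⟨Polynomial.C k * a, (Polynomial.natDegree_C_mul_le _ _).trans ha, fun y => ?_⟩
    simp [ha', Finset.mul_sum, mul_assoc]

/-- A line with `s` support points and at least one zero of the codeword forces
`s * (p + 1 - s) ≤ wt(c)`. -/
lemma line_weight_bound {p : ℕ} [Fact p.Prime] {c : PGPoint (ZMod p) → ZMod p}
    (hc : c ∈ code p (ZMod p)) {l Q : PGPoint (ZMod p)} (hQ : PGIncident l Q) (hQ0 : c Q = 0) :
    ((linePts l).filter fun P => c P ≠ 0).card * (p + 1) ≤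
      (supp c).card + ((linePts l).filter fun P => c P ≠ 0).card ^ 2 := by
  obtain ⟨R, hR, hRQ⟩ : ∃ R ∈ linePts l, R ≠ Q := by
    apply Finset.exists_mem_ne
    rw [card_linePts]
    have := (Fact.out : p.Prime).pos
    omega
  rw [mem_linePts] at hR
  obtain ⟨T, hT⟩ := exists_not_incident l
  have hI : LinearIndependent (ZMod p) ![Q.rep, R.rep, T.rep] := by
    rw [Fintype.linearIndependent_iff]
    intro a ha
    simp [Fin.sum_univ_three] at ha
    have hl : ∑ i, l.rep i * (a 0 • Q.rep + a 1 • R.rep + a 2 • T.rep) i = 0 := by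
      rw [ha]; simp
    have hl2 : a 0 * (∑ i, l.rep i * Q.rep i) + a 1 * (∑ i, l.rep i * R.rep i)
        + a 2 * (∑ i, l.rep i * T.rep i) = 0 := by
      rw [← hl]
      simp [Fin.sum_univ_three]
      ring
    unfold PGIncident at hQ hR hT
    rw [hQ, hR] at hl2
    have h2 : a 2 = 0 := by simpa [hT] using hl2
    rw [h2, zero_smul, add_zero] at ha
    have h01 := LinearIndependent.pair_iff.mp
      (Projectivization.linearIndependent_pair_iff_ne.mpr hRQ.symm) _ _ ha
    intro i
    fin_cases i
    · exact h01.1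
    · exact h01.2
    · exact h2
  choose g hgd hg using exists_moment_poly hc hI
  have key := row_weight_bound (fun y x => c (affPt hI x y)) g hgd hg 0
  have hrow : (linePts l).erase Q = Finset.univ.image fun x => affPt hI x 0 := by
    symm
    apply Finset.eq_of_subset_of_card_le
    · intro P hP
      obtain ⟨x, -, rfl⟩ := Finset.mem_image.mp hP
      rw [Finset.mem_erase, mem_linePts, incident_affPt]
      unfold PGIncident at hQ hR
      refine ⟨fun h => ?_, by rw [hQ, hR]; ring⟩
      rw [affPt] at h
      conv_rhs at h => rw [← Projectivization.mk_rep Q]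
      rw [Projectivization.mk_eq_mk_iff'] at h
      obtain ⟨a, ha⟩ := h
      have := Fintype.linearIndependent_iff.mp hI ![x - a, 1, 0] (by
        have h2 := sub_eq_zero.mpr ha.symm
        rw [← h2]
        ext i
        simp [Fin.sum_univ_three]
        ring) 1
      simp at this
    · rw [Finset.card_erase_of_mem (mem_linePts.mpr hQ), card_linePts,
        Finset.card_image_of_injective _ fun x x' h => (affPt_injective hI h).1]
      simp [ZMod.card]
  have hs : ((linePts l).filter fun P => c P ≠ 0).card
      = (Finset.univ.filter fun x => c (affPt hI x 0) ≠ 0).card := by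
    have h1 : (linePts l).filter (fun P => c P ≠ 0)
        = ((linePts l).erase Q).filter fun P => c P ≠ 0 := by
      ext P
      simp only [Finset.mem_filter, Finset.mem_erase]
      constructor
      · rintro ⟨h1, h2⟩
        exact ⟨⟨fun h => h2 (h ▸ hQ0), h1⟩, h2⟩
      · rintro ⟨⟨_, h1⟩, h2⟩
        exact ⟨h1, h2⟩
    rw [h1, hrow, Finset.filter_image,
      Finset.card_image_of_injective _ fun x x' h => (affPt_injective hI h).1]
  have hw : ∑ y, (Finset.univ.filter fun x => c (affPt hI x y) ≠ 0).card ≤ (supp c).card := by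
    rw [← Finset.card_sigma]
    refine Finset.card_le_card_of_injOn (fun z => affPt hI z.2 z.1) ?_ ?_
    · intro z hz
      simpa [supp] using hz
    · rintro ⟨y, x⟩ _ ⟨y', x'⟩ _ h
      obtain ⟨rfl, rfl⟩ := affPt_injective hI h
      rfl
  rw [ZMod.card] at key
  rw [hs]
  refine Nat.le_trans ?_ (Nat.add_le_add_right hw _)
  convert key

/-! ### Codewords supported on at most four lines -/

/-- Subtracting a multiple of a line on which `c` is constant off the set `R`. -/
lemma peel {p : ℕ} {F : Type} [Field F] {c : PGPoint F → ZMod p} {l : PGPoint F} {a : ZMod p}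
    {R : PGPoint F → Prop} (h1 : ∀ Q, PGIncident l Q → c Q = a ∨ R Q)
    (h2 : ∀ Q, c Q ≠ 0 → PGIncident l Q ∨ R Q) :
    ∀ Q, (c - a • chi p l) Q ≠ 0 → R Q := by
  intro Q hQ
  by_cases hl : PGIncident l Q
  · refine (h1 Q hl).resolve_left fun h => hQ ?_
    simp [chi, hl, h]
  · refine (h2 Q fun h => hQ ?_).resolve_left hl
    simp [chi, hl, h]

lemma sub_mem_code {p : ℕ} {F : Type} [Field F] {c : PGPoint F → ZMod p} (hc : c ∈ code p F)
    (l : PGPoint F) (a : ZMod p) : c - a • chi p l ∈ code p F :=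
  Submodule.sub_mem _ hc (Submodule.smul_mem _ _ (Submodule.subset_span ⟨l, rfl⟩))

/-- If a codeword is supported on lines through `O` (the set `A`) together with one line `l` missing
`O`, then a multiple of `l` can be subtracted so that the support lies on the lines of `A`: the line
joining `O` to a point `Q` of `l` off `A` has sum `c O + c Q`. -/
lemma cone_peel {p : ℕ} [Fact p.Prime] {c : PGPoint (ZMod p) → ZMod p}
    (hc : c ∈ code p (ZMod p)) {O l : PGPoint (ZMod p)} {A : Set (PGPoint (ZMod p))}
    (hA : ∀ m ∈ A, PGIncident m O) (hl : ¬ PGIncident l O)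
    (hs : ∀ Q, c Q ≠ 0 → PGIncident l Q ∨ ∃ m ∈ A, PGIncident m Q) :
    ∃ a : ZMod p, ∀ Q, (c - a • chi p l) Q ≠ 0 → ∃ m ∈ A, PGIncident m Q := by
  obtain ⟨k, hk⟩ := exists_lineSum hc
  refine ⟨k - c O, peel (fun Q hQ => ?_) hs⟩
  by_cases hR : ∃ m ∈ A, PGIncident m Q
  · exact Or.inr hR
  left
  have hOQ : O ≠ Q := by
    rintro rfl
    exact hl hQ
  obtain ⟨n, hnO, hnQ⟩ := exists_line_through hOQ
  have hsum : ∑ P ∈ ({O, Q} : Finset (PGPoint (ZMod p))), c P = ∑ P ∈ linePts n, c P := by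
    apply Finset.sum_subset
    · intro P hP
      rw [Finset.mem_insert, Finset.mem_singleton] at hP
      rcases hP with rfl | rfl
      · exact mem_linePts.mpr hnO
      · exact mem_linePts.mpr hnQ
    · intro P hP hP'
      rw [mem_linePts] at hP
      by_contra h0
      apply hP'
      rw [Finset.mem_insert, Finset.mem_singleton]
      rcases hs P h0 with h | ⟨m, hm, h⟩
      · right
        refine eq_of_incident_of_ne (l := n) (m := l) ?_ hnQ hQ hP h
        rintro rfl
        exact hl hnO
      · left
        refine eq_of_incident_of_ne (l := n) (m := m) ?_ hnO (hA m hm) hP h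
        rintro rfl
        exact hR ⟨n, hm, hnQ⟩
  rw [hk, Finset.sum_pair hOQ] at hsum
  rw [← hsum]
  ring

lemma one_line {p : ℕ} [Fact p.Prime] {c : PGPoint (ZMod p) → ZMod p}
    (hc : c ∈ code p (ZMod p)) {l : PGPoint (ZMod p)} (hs : ∀ Q, c Q ≠ 0 → PGIncident l Q) :
    ∃ a : ZMod p, c = a • chi p l := by
  obtain ⟨O, hO⟩ := exists_not_incident l
  obtain ⟨a, ha⟩ := cone_peel hc (A := ∅) (by simp) hO (fun Q hQ => Or.inl (hs Q hQ))
  refine ⟨a, sub_eq_zero.mp (funext fun Q => ?_)⟩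
  by_contra h
  obtain ⟨m, hm, -⟩ := ha Q h
  exact hm

lemma exists_mem_not_mem {p : ℕ} [Fact p.Prime]
    {l m : PGPoint (ZMod p)} (h : l ≠ m) : ∃ O, PGIncident l O ∧ ¬ PGIncident m O := by
  obtain ⟨P, h1, h2⟩ := exists_common_point h
  obtain ⟨O, hO, hne⟩ : ∃ R ∈ linePts l, R ≠ P := by
    apply Finset.exists_mem_ne
    rw [card_linePts]
    have := (Fact.out : p.Prime).pos
    omega
  rw [mem_linePts] at hO
  exact ⟨O, hO, fun h' => hne (eq_of_incident_of_ne h h1 h2 hO h')⟩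

lemma two_lines {p : ℕ} [Fact p.Prime] {c : PGPoint (ZMod p) → ZMod p}
    (hc : c ∈ code p (ZMod p)) {l m : PGPoint (ZMod p)} (hlm : l ≠ m)
    (hs : ∀ Q, c Q ≠ 0 → PGIncident l Q ∨ PGIncident m Q) :
    ∃ a b : ZMod p, c = a • chi p l + b • chi p m := by
  obtain ⟨O, hO, hO'⟩ := exists_mem_not_mem hlm.symm
  obtain ⟨a, ha⟩ := cone_peel hc (A := {m}) (by simpa using hO) hO' (by simpa using hs)
  obtain ⟨b, hb⟩ := one_line (sub_mem_code hc l a) (l := m) (by simpa using ha)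
  exact ⟨a, b, by rw [← hb]; abel⟩

lemma three_concurrent {p : ℕ} [Fact p.Prime] {c : PGPoint (ZMod p) → ZMod p}
    (hc : c ∈ code p (ZMod p)) {l₁ l₂ l₃ P : PGPoint (ZMod p)} (h12 : l₁ ≠ l₂) (h13 : l₁ ≠ l₃)
    (h23 : l₂ ≠ l₃) (h1 : PGIncident l₁ P) (h2 : PGIncident l₂ P) (h3 : PGIncident l₃ P)
    (hs : ∀ Q, c Q ≠ 0 → PGIncident l₁ Q ∨ PGIncident l₂ Q ∨ PGIncident l₃ Q) :
    IsOddOn p c 3 ![l₁, l₂, l₃] P ∨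
      ∃ a b d : ZMod p, c = a • chi p l₁ + b • chi p l₂ + d • chi p l₃ := by
  by_cases k1 : ∃ k : ZMod p, ∀ Q, PGIncident l₁ Q → Q ≠ P → c Q = k
  · right
    obtain ⟨k, hk⟩ := k1
    obtain ⟨a, b, hab⟩ := two_lines (sub_mem_code hc l₁ k) h23
      (peel (R := fun Q => PGIncident l₂ Q ∨ PGIncident l₃ Q) (fun Q hQ => by
        by_cases hQP : Q = P
        · subst hQP; exact Or.inr (Or.inl h2)
        · exact Or.inl (hk Q hQ hQP)) (fun Q hQ => by have := hs Q hQ; tauto))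
    exact ⟨k, a, b, by rw [add_assoc, ← hab]; abel⟩
  by_cases k2 : ∃ k : ZMod p, ∀ Q, PGIncident l₂ Q → Q ≠ P → c Q = k
  · right
    obtain ⟨k, hk⟩ := k2
    obtain ⟨a, b, hab⟩ := two_lines (sub_mem_code hc l₂ k) h13
      (peel (R := fun Q => PGIncident l₁ Q ∨ PGIncident l₃ Q) (fun Q hQ => by
        by_cases hQP : Q = P
        · subst hQP; exact Or.inr (Or.inl h1)
        · exact Or.inl (hk Q hQ hQP)) (fun Q hQ => by have := hs Q hQ; tauto))
    exact ⟨a, k, b, by rw [add_right_comm, ← hab]; abel⟩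
  by_cases k3 : ∃ k : ZMod p, ∀ Q, PGIncident l₃ Q → Q ≠ P → c Q = k
  · right
    obtain ⟨k, hk⟩ := k3
    obtain ⟨a, b, hab⟩ := two_lines (sub_mem_code hc l₃ k) h12
      (peel (R := fun Q => PGIncident l₁ Q ∨ PGIncident l₂ Q) (fun Q hQ => by
        by_cases hQP : Q = P
        · subst hQP; exact Or.inr (Or.inl h1)
        · exact Or.inl (hk Q hQ hQP)) (fun Q hQ => by have := hs Q hQ; tauto))
    exact ⟨a, b, k, by rw [← hab]; abel⟩
  left
  refine ⟨?_, ?_, ?_, ?_⟩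
  · intro i j hij
    fin_cases i <;> fin_cases j <;> simp_all
  · intro i
    fin_cases i <;> assumption
  · intro Q hQ
    rcases hs Q hQ with h | h | h
    · exact ⟨0, h⟩
    · exact ⟨1, h⟩
    · exact ⟨2, h⟩
  · intro i
    fin_cases i <;> assumption

/-- The trichotomy of the theorem: a combination of at most four lines, an odd codeword on three
lines plus a multiple of a line, or an odd codeword on four lines. -/
def IsFourLineType (p : ℕ) [Fact p.Prime] (c : PGPoint (ZMod p) → ZMod p) : Prop :=
  (∃ (l : Fin 4 → PGPoint (ZMod p)) (a : Fin 4 → ZMod p), c = ∑ i, a i • chi p (l i)) ∨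
    (∃ (c₃ : PGPoint (ZMod p) → ZMod p) (l₃ : Fin 3 → PGPoint (ZMod p))
        (P : PGPoint (ZMod p)) (l : PGPoint (ZMod p)) (a : ZMod p),
      c₃ ∈ code p (ZMod p) ∧ IsOddOn p c₃ 3 l₃ P ∧ c = c₃ + a • chi p l) ∨
    (∃ (l₄ : Fin 4 → PGPoint (ZMod p)) (P : PGPoint (ZMod p)), IsOddOn p c 4 l₄ P)

lemma isFourLineType_of_sub {p : ℕ} [Fact p.Prime] {c : PGPoint (ZMod p) → ZMod p}
    (hc : c ∈ code p (ZMod p)) {l₁ l₂ l₃ P : PGPoint (ZMod p)} (h12 : l₁ ≠ l₂) (h13 : l₁ ≠ l₃)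
    (h23 : l₂ ≠ l₃) (h1 : PGIncident l₁ P) (h2 : PGIncident l₂ P) (h3 : PGIncident l₃ P)
    (l : PGPoint (ZMod p)) (a : ZMod p)
    (hs : ∀ Q, (c - a • chi p l) Q ≠ 0 → PGIncident l₁ Q ∨ PGIncident l₂ Q ∨ PGIncident l₃ Q) :
    IsFourLineType p c := by
  have hc' := sub_mem_code hc l a
  rcases three_concurrent hc' h12 h13 h23 h1 h2 h3 hs with h | ⟨x, y, z, h⟩
  · exact Or.inr (Or.inl ⟨_, _, P, l, a, hc', h, by abel⟩)
  · refine Or.inl ⟨![l₁, l₂, l₃, l], ![x, y, z, a], ?_⟩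
    simp only [Fin.sum_univ_four, Matrix.cons_val]
    rw [← h]
    abel

lemma four_concurrent {p : ℕ} [Fact p.Prime] {c : PGPoint (ZMod p) → ZMod p}
    (hc : c ∈ code p (ZMod p)) {l : Fin 4 → PGPoint (ZMod p)} (hl : Function.Injective l)
    {P : PGPoint (ZMod p)} (hP : ∀ i, PGIncident (l i) P)
    (hs : ∀ Q, c Q ≠ 0 → ∃ i, PGIncident (l i) Q) : IsFourLineType p c := by
  by_cases hodd : ∀ i, ¬ ∃ k : ZMod p, ∀ Q, PGIncident (l i) Q → Q ≠ P → c Q = k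
  · exact Or.inr (Or.inr ⟨l, P, hl, hP, hs, hodd⟩)
  push Not at hodd
  obtain ⟨i, k, hk⟩ := hodd
  -- The lines `l (i + 1)`, `l (i + 2)`, `l (i + 3)` are the other three.
  refine isFourLineType_of_sub hc (l₁ := l (i + 1)) (l₂ := l (i + 2)) (l₃ := l (i + 3)) (P := P)
    (hl.ne (by simp)) (hl.ne (by simp)) (hl.ne (by simp)) (hP _) (hP _) (hP _) (l i) k
    (peel (fun Q hQ => ?_) (fun Q hQ => ?_))
  · by_cases hQP : Q = P
    · subst hQP; exact Or.inr (Or.inl (hP _))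
    · exact Or.inl (hk Q hQ hQP)
  · obtain ⟨j, hj⟩ := hs Q hQ
    have : j = i ∨ j = i + 1 ∨ j = i + 2 ∨ j = i + 3 := by
      clear hj hk
      fin_cases i <;> fin_cases j <;> simp
    rcases this with rfl | rfl | rfl | rfl <;> simp [hj]

lemma three_concurrent_add_one {p : ℕ} [Fact p.Prime] {c : PGPoint (ZMod p) → ZMod p}
    (hc : c ∈ code p (ZMod p)) {l₁ l₂ l₃ l₄ P : PGPoint (ZMod p)} (h12 : l₁ ≠ l₂) (h13 : l₁ ≠ l₃)
    (h23 : l₂ ≠ l₃) (h1 : PGIncident l₁ P) (h2 : PGIncident l₂ P) (h3 : PGIncident l₃ P)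
    (h4 : ¬ PGIncident l₄ P)
    (hs : ∀ Q, c Q ≠ 0 →
      PGIncident l₁ Q ∨ PGIncident l₂ Q ∨ PGIncident l₃ Q ∨ PGIncident l₄ Q) :
    IsFourLineType p c := by
  obtain ⟨a, ha⟩ := cone_peel hc (O := P) (l := l₄) (A := {l₁, l₂, l₃}) (by simp [h1, h2, h3]) h4
    (fun Q hQ => by have := hs Q hQ; simp; tauto)
  exact isFourLineType_of_sub hc h12 h13 h23 h1 h2 h3 l₄ a (by simpa using ha)

lemma triangle {p : ℕ} [Fact p.Prime] {c : PGPoint (ZMod p) → ZMod p}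
    (hc : c ∈ code p (ZMod p)) {l₁ l₂ l₃ P : PGPoint (ZMod p)} (h12 : l₁ ≠ l₂)
    (h1 : PGIncident l₁ P) (h2 : PGIncident l₂ P) (h3 : ¬ PGIncident l₃ P)
    (hs : ∀ Q, c Q ≠ 0 → PGIncident l₁ Q ∨ PGIncident l₂ Q ∨ PGIncident l₃ Q) :
    ∃ a b d : ZMod p, c = a • chi p l₁ + b • chi p l₂ + d • chi p l₃ := by
  obtain ⟨d, hd⟩ := cone_peel hc (O := P) (l := l₃) (A := {l₁, l₂}) (by simp [h1, h2]) h3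
    (fun Q hQ => by have := hs Q hQ; simp; tauto)
  obtain ⟨a, b, hab⟩ := two_lines (sub_mem_code hc l₃ d) h12 (by simpa using hd)
  exact ⟨a, b, d, by rw [← hab]; abel⟩

lemma exists_affPt_eq {F : Type} [Field F] {q r t : Fin 3 → F}
    (hI : LinearIndependent F ![q, r, t]) {l Q : PGPoint F} (hq : ∑ i, l.rep i * q i = 0)
    (ht : ∑ i, l.rep i * t i = 0) (hQ : ¬ PGIncident l Q) : ∃ x y, Q = affPt hI x y := by
  have htop := hI.span_eq_top_of_card_eq_finrank' (by simp)
  have hmem : Q.rep ∈ Submodule.span F (Set.range ![q, r, t]) := by rw [htop]; trivial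
  obtain ⟨a, ha⟩ := (Submodule.mem_span_range_iff_exists_fun F).mp hmem
  simp only [Fin.sum_univ_three, Matrix.cons_val] at ha
  have hb : a 1 ≠ 0 := by
    intro h
    apply hQ
    unfold PGIncident
    rw [← ha, h]
    simp only [Fin.sum_univ_three, Pi.add_apply, Pi.smul_apply, smul_eq_mul] at hq ht ⊢
    linear_combination a 0 * hq + a 2 * ht
  refine ⟨a 0 / a 1, a 2 / a 1, ?_⟩
  rw [affPt]
  conv_lhs => rw [← Projectivization.mk_rep Q]
  rw [Projectivization.mk_eq_mk_iff']
  refine ⟨a 1, ?_⟩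
  rw [← ha]
  ext i
  simp only [Pi.add_apply, Pi.smul_apply, smul_eq_mul]
  field_simp

/-- A codeword supported on four lines, no three concurrent, is a combination of these lines.
In the chart with `q, r, t` the vertices of the triangle `l₁, l₂, l₃`, a row `y ≠ 0` meets the
support only on `l₃`, where `x = 0`, and on `l₄`, where `x` is an affine function of `y`. So the
first moment of the row is the value of `c` on `l₄` times that affine function; being itself affine
with the same zero, it is proportional to it, and `c` is constant on `l₄` off the vertices. -/
lemma four_general {p : ℕ} [Fact p.Prime] {c : PGPoint (ZMod p) → ZMod p}
    (hc : c ∈ code p (ZMod p)) {l₁ l₂ l₃ l₄ O₁₂ O₁₃ O₂₃ : PGPoint (ZMod p)} (h12 : l₁ ≠ l₂)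
    (a1 : PGIncident l₁ O₁₂) (a2 : PGIncident l₂ O₁₂) (a3 : ¬ PGIncident l₃ O₁₂)
    (a4 : ¬ PGIncident l₄ O₁₂) (b1 : PGIncident l₁ O₁₃) (b2 : ¬ PGIncident l₂ O₁₃)
    (b3 : PGIncident l₃ O₁₃) (b4 : ¬ PGIncident l₄ O₁₃) (d1 : ¬ PGIncident l₁ O₂₃)
    (d2 : PGIncident l₂ O₂₃) (d3 : PGIncident l₃ O₂₃) (d4 : ¬ PGIncident l₄ O₂₃)
    (hs : ∀ Q, c Q ≠ 0 →
      PGIncident l₁ Q ∨ PGIncident l₂ Q ∨ PGIncident l₃ Q ∨ PGIncident l₄ Q) :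
    IsFourLineType p c := by
  have hI : LinearIndependent (ZMod p) ![O₁₂.rep, O₁₃.rep, O₂₃.rep] := by
    rw [Fintype.linearIndependent_iff]
    intro a ha
    simp [Fin.sum_univ_three] at ha
    have hl : ∀ l : PGPoint (ZMod p), a 0 * (∑ i, l.rep i * O₁₂.rep i)
        + a 1 * (∑ i, l.rep i * O₁₃.rep i) + a 2 * (∑ i, l.rep i * O₂₃.rep i) = 0 := by
      intro l
      have hl : ∑ i, l.rep i * (a 0 • O₁₂.rep + a 1 • O₁₃.rep + a 2 • O₂₃.rep) i = 0 := by
        rw [ha]; simp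
      rw [← hl]
      simp [Fin.sum_univ_three]
      ring
    have e1 := hl l₁
    have e2 := hl l₂
    have e3 := hl l₃
    unfold PGIncident at a1 a2 a3 b1 b2 b3 d1 d2 d3
    rw [a1, b1] at e1
    rw [a2, d2] at e2
    rw [b3, d3] at e3
    intro i
    fin_cases i
    · simpa [a3] using e3
    · simpa [b2] using e2
    · simpa [d1] using e1
  obtain ⟨g, hgd, hg⟩ := exists_moment_poly hc hI 1
  have i1 : ∀ x y, PGIncident l₁ (affPt hI x y) ↔ y = 0 := by
    intro x y
    rw [incident_affPt]
    unfold PGIncident at a1 b1 d1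
    rw [a1, b1]
    simp [d1]
  have i2 : ∀ x y, ¬ PGIncident l₂ (affPt hI x y) := by
    intro x y
    rw [incident_affPt]
    unfold PGIncident at a2 b2 d2
    rw [a2, d2]
    simpa using b2
  have i3 : ∀ x y, PGIncident l₃ (affPt hI x y) ↔ x = 0 := by
    intro x y
    rw [incident_affPt]
    unfold PGIncident at a3 b3 d3
    rw [b3, d3]
    simp [a3]
  have i4 := fun x y => incident_affPt hI x y l₄
  unfold PGIncident at a4 b4 d4
  set A := ∑ i, l₄.rep i * O₁₂.rep i
  set B := ∑ i, l₄.rep i * O₁₃.rep i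
  set D := ∑ i, l₄.rep i * O₂₃.rep i
  have hrow : ∀ y, y ≠ 0 → g.eval y =
      c (affPt hI (-(B + y * D) / A) y) * (-(B + y * D) / A) := by
    intro y hy
    rw [hg, Finset.sum_eq_single (-(B + y * D) / A), pow_one]
    · intro x _ hx
      by_cases hx0 : x = 0
      · simp [hx0]
      · have : c (affPt hI x y) = 0 := by
          by_contra h
          rcases hs _ h with h | h | h | h
          · exact hy ((i1 x y).mp h)
          · exact i2 x y h
          · exact hx0 ((i3 x y).mp h)
          · apply hx
            rw [i4] at h
            field_simp
            linear_combination h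
        simp [this]
    · intro h
      exact absurd (Finset.mem_univ _) h
  obtain ⟨u, v, rfl⟩ := Polynomial.exists_eq_X_add_C_of_natDegree_le_one hgd
  simp only [Polynomial.eval_add, Polynomial.eval_mul, Polynomial.eval_C, Polynomial.eval_X]
    at hrow
  have hv : v = u * (B / D) := by
    have h := hrow (-B / D) (div_ne_zero (neg_ne_zero.mpr b4) d4)
    have h0 : -(B + -B / D * D) / A = 0 := by
      field_simp
      ring
    rw [h0, mul_zero] at h
    linear_combination h
  have hconst : ∀ Q, PGIncident l₄ Q →
      c Q = -(u * A / D) ∨ (PGIncident l₁ Q ∨ PGIncident l₂ Q ∨ PGIncident l₃ Q) := by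
    intro Q hQ
    by_cases hR : PGIncident l₁ Q ∨ PGIncident l₂ Q ∨ PGIncident l₃ Q
    · exact Or.inr hR
    left
    push Not at hR
    obtain ⟨hR1, hR2, hR3⟩ := hR
    obtain ⟨x, y, rfl⟩ := exists_affPt_eq hI a2 d2 hR2
    rw [i1] at hR1
    rw [i3] at hR3
    rw [i4] at hQ
    have hx : x = -(B + y * D) / A := by
      field_simp
      linear_combination hQ
    have h := hrow y hR1
    rw [← hx] at h
    have h2 : c (affPt hI x y) * x = -(u * A / D) * x := by
      rw [← h, hv, hx]
      field_simp
      ring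
    exact mul_right_cancel₀ hR3 h2
  have hpeel := peel hconst (fun Q hQ => by have := hs Q hQ; tauto)
  obtain ⟨x, y, z, h⟩ := triangle (sub_mem_code hc l₄ (-(u * A / D))) h12 a1 a2 a3 hpeel
  refine Or.inl ⟨![l₁, l₂, l₃, l₄], ![x, y, z, -(u * A / D)], ?_⟩
  simp only [Fin.sum_univ_four, Matrix.cons_val]
  rw [← h]
  abel

lemma four_lines {p : ℕ} [Fact p.Prime] {c : PGPoint (ZMod p) → ZMod p}
    (hc : c ∈ code p (ZMod p)) {l : Fin 4 → PGPoint (ZMod p)} (hl : Function.Injective l)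
    (hs : ∀ Q, c Q ≠ 0 → ∃ i, PGIncident (l i) Q) : IsFourLineType p c := by
  have hs' : ∀ Q, c Q ≠ 0 → PGIncident (l 0) Q ∨ PGIncident (l 1) Q ∨ PGIncident (l 2) Q ∨
      PGIncident (l 3) Q := by
    intro Q hQ
    obtain ⟨i, hi⟩ := hs Q hQ
    fin_cases i <;> simp_all
  have n01 : l 0 ≠ l 1 := hl.ne (by simp)
  have n02 : l 0 ≠ l 2 := hl.ne (by simp)
  have n03 : l 0 ≠ l 3 := hl.ne (by simp)
  have n12 : l 1 ≠ l 2 := hl.ne (by simp)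
  have n13 : l 1 ≠ l 3 := hl.ne (by simp)
  have n23 : l 2 ≠ l 3 := hl.ne (by simp)
  obtain ⟨P, p0, p1⟩ := exists_common_point n01
  by_cases p2 : PGIncident (l 2) P
  · by_cases p3 : PGIncident (l 3) P
    · refine four_concurrent hc hl (P := P) (fun i => ?_) hs
      fin_cases i <;> assumption
    · exact three_concurrent_add_one hc n01 n02 n12 p0 p1 p2 p3 hs'
  by_cases p3 : PGIncident (l 3) P
  · exact three_concurrent_add_one hc n01 n03 n13 p0 p1 p3 p2
      (fun Q hQ => by have := hs' Q hQ; tauto)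
  obtain ⟨R, r2, r3⟩ := exists_common_point n23
  by_cases r0 : PGIncident (l 0) R
  · refine three_concurrent_add_one hc n02 n03 n23 r0 r2 r3 (l₄ := l 1) (fun r1 => ?_)
      (fun Q hQ => by have := hs' Q hQ; tauto)
    rw [eq_of_incident_of_ne n01 p0 p1 r0 r1] at r2
    exact p2 r2
  by_cases r1 : PGIncident (l 1) R
  · exact three_concurrent_add_one hc n12 n13 n23 r1 r2 r3 r0
      (fun Q hQ => by have := hs' Q hQ; tauto)
  obtain ⟨S, s0, s2⟩ := exists_common_point n02
  obtain ⟨T, t1, t2⟩ := exists_common_point n12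
  refine four_general hc n01 p0 p1 p2 p3 s0 (fun s1 => ?_) s2 (fun s3 => ?_) (fun t0 => ?_) t1 t2
    (fun t3 => ?_) hs'
  · exact p2 (eq_of_incident_of_ne n01 p0 p1 s0 s1 ▸ s2)
  · exact r0 (eq_of_incident_of_ne n23 r2 r3 s2 s3 ▸ s0)
  · exact p2 (eq_of_incident_of_ne n01 p0 p1 t0 t1 ▸ t2)
  · exact r1 (eq_of_incident_of_ne n23 r2 r3 t2 t3 ▸ t1)

/-! ### Short and long lines -/

/-- The number of support points of `c` on the line `l`. -/
def lineWt {p : ℕ} [Fact p.Prime] (c : PGPoint (ZMod p) → ZMod p) (l : PGPoint (ZMod p)) : ℕ :=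
  ((linePts l).filter fun P => c P ≠ 0).card

lemma lineWt_bound {p : ℕ} [Fact p.Prime] {c : PGPoint (ZMod p) → ZMod p}
    (hc : c ∈ code p (ZMod p)) {l : PGPoint (ZMod p)} (hl : lineWt c l ≤ p) :
    lineWt c l * (p + 1) ≤ (supp c).card + lineWt c l ^ 2 := by
  obtain ⟨Q, hQ, hQ0⟩ : ∃ Q, PGIncident l Q ∧ c Q = 0 := by
    by_contra! h
    have : (linePts l).filter (fun P => c P ≠ 0) = linePts l :=
      Finset.filter_true_of_mem fun P hP => h P (mem_linePts.mp hP)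
    rw [lineWt, this, card_linePts] at hl
    omega
  exact line_weight_bound hc hQ hQ0

/-- Every line is short (at most `4` support points) or long (at least `p - 3`). -/
lemma short_or_long {p : ℕ} [Fact p.Prime] {c : PGPoint (ZMod p) → ZMod p}
    (hc : c ∈ code p (ZMod p)) (hw : (supp c).card + 26 ≤ 5 * p) (l : PGPoint (ZMod p)) :
    lineWt c l ≤ 4 ∨ p ≤ lineWt c l + 3 := by
  by_contra! h
  obtain ⟨h1, h2⟩ := h
  have h3 := lineWt_bound hc (l := l) (by omega)
  generalize lineWt c l = s at *
  generalize (supp c).card = w at *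
  zify at *
  nlinarith [mul_nonneg (sub_nonneg.mpr (Int.add_one_le_of_lt h1))
    (sub_nonneg.mpr (Int.add_one_le_of_lt h2))]

/-- Every support point lies on a long line. If the heaviest line through `P` has `m ≤ 4` support
points, then `wt(c) ≤ (m - 1)(p + 1) + 1`, while `m (p + 1 - m) ≤ wt(c)`, so that `p ≤ m ^ 2`. -/
lemma exists_long_line {p : ℕ} [Fact p.Prime] (hp : 17 ≤ p) {c : PGPoint (ZMod p) → ZMod p}
    (hc : c ∈ code p (ZMod p)) (hw : (supp c).card + 26 ≤ 5 * p) {P : PGPoint (ZMod p)}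
    (hP : c P ≠ 0) : ∃ l, PGIncident l P ∧ p ≤ lineWt c l + 3 := by
  have hne : (linePts P).Nonempty := by
    rw [← Finset.card_pos, card_linePts]
    omega
  obtain ⟨l, hl, hmax⟩ := Finset.exists_max_image (linePts P) (lineWt c) hne
  rw [mem_linePts, incident_comm] at hl
  refine ⟨l, hl, ?_⟩
  by_contra hlong
  have hm : lineWt c l ≤ 4 := (short_or_long hc hw l).resolve_right hlong
  have hb := lineWt_bound hc (l := l) (by omega)
  have hpos : 1 ≤ lineWt c l :=
    Finset.card_pos.mpr ⟨P, Finset.mem_filter.mpr ⟨mem_linePts.mpr hl, hP⟩⟩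
  have hcover : (supp c).erase P ⊆
      (linePts P).biUnion fun m => ((linePts m).filter fun Q => c Q ≠ 0).erase P := by
    intro Q hQ
    rw [Finset.mem_erase, mem_supp] at hQ
    obtain ⟨m, hm1, hm2⟩ := exists_line_through hQ.1
    rw [Finset.mem_biUnion]
    refine ⟨m, mem_linePts.mpr ((incident_comm _ _).mp hm2), ?_⟩
    rw [Finset.mem_erase, Finset.mem_filter, mem_linePts]
    exact ⟨hQ.1, hm1, hQ.2⟩
  have hcard : ((supp c).erase P).card ≤ (p + 1) * (lineWt c l - 1) := by
    refine (Finset.card_le_card hcover).trans ?_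
    rw [← card_linePts p P]
    refine Finset.card_biUnion_le_card_mul _ _ _ fun m hm => ?_
    have hmP : P ∈ (linePts m).filter fun Q => c Q ≠ 0 := by
      rw [Finset.mem_filter, mem_linePts, incident_comm]
      exact ⟨mem_linePts.mp hm, hP⟩
    rw [Finset.card_erase_of_mem hmP]
    exact Nat.sub_le_sub_right (hmax m hm) 1
  rw [Finset.card_erase_of_mem (mem_supp.mpr hP)] at hcard
  generalize lineWt c l = m at *
  interval_cases m <;> omega

/-- A family of lines has at least as many support points as the sum of their contributions, minus
one for each pair of lines. -/
lemma sum_lineWt_le {p : ℕ} [Fact p.Prime] (c : PGPoint (ZMod p) → ZMod p)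
    (T : Finset (PGPoint (ZMod p))) :
    ∑ l ∈ T, lineWt c l ≤
      (T.biUnion fun l => (linePts l).filter fun P => c P ≠ 0).card + ∑ i ∈ Finset.range T.card, i := by
  induction T using Finset.induction_on with
  | empty => simp
  | insert l T hl ih =>
    rw [Finset.sum_insert hl, Finset.biUnion_insert, Finset.card_insert_of_notMem hl,
      Finset.sum_range_succ]
    have h1 := Finset.card_union_add_card_inter ((linePts l).filter fun P => c P ≠ 0)
      (T.biUnion fun l => (linePts l).filter fun P => c P ≠ 0)
    have h2 : (((linePts l).filter fun P => c P ≠ 0) ∩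
        (T.biUnion fun l => (linePts l).filter fun P => c P ≠ 0)).card ≤ T.card := by
      rw [Finset.inter_biUnion]
      refine (Finset.card_biUnion_le_card_mul _ _ 1 fun m hm => ?_).trans (by simp)
      rw [Finset.card_le_one]
      intro a ha b hb
      simp only [Finset.mem_inter, Finset.mem_filter, mem_linePts] at ha hb
      have hne : l ≠ m := by
        rintro rfl
        exact hl hm
      exact eq_of_incident_of_ne hne hb.1.1 hb.2.1 ha.1.1 ha.2.1
    have h3 : lineWt c l = ((linePts l).filter fun P => c P ≠ 0).card := rfl
    omega

lemma card_long_le {p : ℕ} [Fact p.Prime] {c : PGPoint (ZMod p) → ZMod p}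
    (hw : (supp c).card + 26 ≤ 5 * p) :
    (Finset.univ.filter fun l => p ≤ lineWt c l + 3).card ≤ 4 := by
  by_contra! h
  obtain ⟨T, hT, hT5⟩ := Finset.exists_subset_card_eq (Nat.succ_le_of_lt h)
  have h1 := sum_lineWt_le c T
  have h2 : (T.biUnion fun l => (linePts l).filter fun P => c P ≠ 0).card ≤ (supp c).card := by
    refine Finset.card_le_card fun P hP => ?_
    obtain ⟨l, -, hl⟩ := Finset.mem_biUnion.mp hP
    exact mem_supp.mpr (Finset.mem_filter.mp hl).2
  have h3 : T.card * (p - 3) ≤ ∑ l ∈ T, lineWt c l := by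
    rw [← smul_eq_mul]
    refine Finset.card_nsmul_le_sum _ _ _ fun l hl => ?_
    have := (Finset.mem_filter.mp (hT hl)).2
    omega
  rw [hT5] at h1 h3
  have h5 : ∑ i ∈ Finset.range (Nat.succ 4), i = 10 := rfl
  rw [h5] at h1
  omega

lemma isFourLineType_of_card_supp {p : ℕ} [Fact p.Prime] (hp : 17 ≤ p)
    {c : PGPoint (ZMod p) → ZMod p} (hc : c ∈ code p (ZMod p))
    (hw : (supp c).card + 26 ≤ 5 * p) : IsFourLineType p c := by
  obtain ⟨P⟩ : Nonempty (PGPoint (ZMod p)) := inferInstance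
  have h4 : 4 ≤ Fintype.card (PGPoint (ZMod p)) := by
    have := Finset.card_le_univ (linePts P)
    rw [card_linePts] at this
    omega
  obtain ⟨L, hL, hL4⟩ := Finset.exists_superset_card_eq (card_long_le hw) h4
  let e : Fin 4 ≃ L := (Fintype.equivFinOfCardEq (by rw [Fintype.card_coe, hL4])).symm
  refine four_lines hc (l := fun i => (e i : PGPoint (ZMod p)))
    (Subtype.val_injective.comp e.injective) fun Q hQ => ?_
  obtain ⟨l, hlQ, hl⟩ := exists_long_line hp hc hw hQ
  refine ⟨e.symm ⟨l, hL (Finset.mem_filter.mpr ⟨Finset.mem_univ _, hl⟩)⟩, ?_⟩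
  simpa using hlQ

theorem stmt19 (p : ℕ) [Fact p.Prime] (hp : 37 ≤ p)
    (c : PGPoint (ZMod p) → ZMod p) (hc : c ∈ code p (ZMod p))
    (hwt₁ : p ≤ 47 → Set.ncard {P : PGPoint (ZMod p) | c P ≠ 0} ≤ 4 * p + 3)
    (hwt₂ : 53 ≤ p → Set.ncard {P : PGPoint (ZMod p) | c P ≠ 0} ≤ 5 * p - 36) :
    (∃ (l : Fin 4 → PGPoint (ZMod p)) (a : Fin 4 → ZMod p),
        c = ∑ i, a i • chi p (l i)) ∨
      (∃ (c₃ : PGPoint (ZMod p) → ZMod p) (l₃ : Fin 3 → PGPoint (ZMod p))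
          (P : PGPoint (ZMod p)) (l : PGPoint (ZMod p)) (a : ZMod p),
        c₃ ∈ code p (ZMod p) ∧ IsOddOn p c₃ 3 l₃ P ∧ c = c₃ + a • chi p l) ∨
      (∃ (l₄ : Fin 4 → PGPoint (ZMod p)) (P : PGPoint (ZMod p)),
        IsOddOn p c 4 l₄ P) := by
  have hcard : Set.ncard {P : PGPoint (ZMod p) | c P ≠ 0} = (supp c).card := by
    rw [← Set.ncard_coe_finset]
    congr 1
    ext P
    simp [supp]
  rw [hcard] at hwt₁ hwt₂
  refine isFourLineType_of_card_supp (by omega) hc ?_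
  by_cases h : p ≤ 47
  · have := hwt₁ h
    omega
  · have h53 : 53 ≤ p := by
      by_contra h'
      have hprime : p.Prime := Fact.out
      have h1 : 48 ≤ p := by omega
      have h2 : p ≤ 52 := by omega
      interval_cases p <;> revert hprime <;> norm_num
    have := hwt₂ h53
    omega

end
end
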